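/- Let p be a prime, e ≥ 1, q = p^e, and let Ω = AlgebraicClosure (ZMod p). Fix positive integers d_1, …, d_n. Let f_1, …, f_r ∈ MvPolynomial (Fin n) Ω be polynomials all of whose coefficients c satisfy c^q = c. For m ≥ 1 set N_m = Nat.card {x : Fin n → Ω | (∀ j, f_j evaluated at x is 0) ∧ (∀ i, (x i)^{q^{m·d_i}} = x i)}, the number of solutions whose i-th coordinate lies in the subfield with q^{m·d_i} elements (the fixed points of the Frobenius vector (Fr_q^{d_1}, …, Fr_q^{d_n}) iterated m times). Then the formal power series Σ_{m≥1} N_m t^m ∈ ℚ[[t]] is rational. -/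

import Mathlib

set_option linter.all false

namespace FVec

open PowerSeries

/-- Hankel matrix of a sequence. -/
def hankel {R : Type*} (a : ℕ → R) (N : ℕ) : Matrix (Fin N) (Fin N) R :=
  Matrix.of fun i j => a (i + j)

/-- a recurrence gives rationality -/
theorem rational_of_recurrence (a : ℕ → ℚ) (N : ℕ) (c : ℕ → ℚ) (hc : c N = 1)
    (h : ∀ n, ∑ k ∈ Finset.range (N + 1), c k * a (n + k) = 0) :
    ∃ A B : Polynomial ℚ, B ≠ 0 ∧
      (B : PowerSeries ℚ) * PowerSeries.mk a = (A : PowerSeries ℚ) := by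
  set B : Polynomial ℚ := ∑ k ∈ Finset.range (N + 1), (Polynomial.C (c k) * Polynomial.X ^ (N - k)) with hB
  refine ⟨PowerSeries.trunc N ((B : PowerSeries ℚ) * PowerSeries.mk a), B, ?_, ?_⟩
  · intro h0
    have : B.coeff 0 = 1 := by
      rw [hB, Polynomial.finsetSum_coeff, Finset.sum_eq_single N]
      · simp [hc]
      · intro k hk hkN
        rw [Polynomial.coeff_C_mul_X_pow, if_neg]
        have := Finset.mem_range.mp hk
        omega
      · simp
    rw [h0] at this
    simp at this
  · ext n
    rw [Polynomial.coeff_coe, PowerSeries.coeff_trunc]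
    split_ifs with hn
    · rfl
    · obtain ⟨m, rfl⟩ : ∃ m, n = N + m := ⟨n - N, by omega⟩
      have hBs : (B : PowerSeries ℚ) = ∑ k ∈ Finset.range (N + 1),
          PowerSeries.C (c k) * PowerSeries.X ^ (N - k) := by
        rw [hB, ← Polynomial.coeToPowerSeries.ringHom_apply, map_sum]
        simp
      rw [← h m, hBs]
      simp only [map_sum, Finset.sum_mul]
      refine Finset.sum_congr rfl fun k hk => ?_
      have := Finset.mem_range.mp hk
      rw [mul_assoc, PowerSeries.coeff_C_mul, show N + m = (m + k) + (N - k) by omega,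
        PowerSeries.coeff_X_pow_mul]
      simp

theorem kronecker_step (a : ℕ → ℚ) (N : ℕ) (hN : (hankel a N).det ≠ 0)
    (h : ∀ M, N < M → (hankel a M).det = 0) :
    ∃ A B : Polynomial ℚ, B ≠ 0 ∧
      (B : PowerSeries ℚ) * PowerSeries.mk a = (A : PowerSeries ℚ) := by
  -- kernel vectors supported below `N` vanish
  have key : ∀ v : ℕ → ℚ, (∀ j < N, ∑ i ∈ Finset.range N, v i * a (i + j) = 0) →
      ∀ i < N, v i = 0 := by
    intro v hv
    by_contra! hcon
    obtain ⟨i, hi, hvi⟩ := hcon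
    apply hN
    rw [← Matrix.exists_vecMul_eq_zero_iff]
    refine ⟨fun i => v i, fun h0 => hvi (congrFun h0 ⟨i, hi⟩), ?_⟩
    ext j
    simp only [Matrix.vecMul, dotProduct, hankel, Matrix.of_apply, Pi.zero_apply]
    rw [← hv j j.2, Finset.sum_range]
  have ker : ∀ M, N < M → ∃ v : ℕ → ℚ, (∃ i < M, v i ≠ 0) ∧
      ∀ j < M, ∑ i ∈ Finset.range M, v i * a (i + j) = 0 := by
    intro M hM
    obtain ⟨v, hv0, hv⟩ := Matrix.exists_vecMul_eq_zero_iff.mpr (h M hM)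
    refine ⟨fun i => if hi : i < M then v ⟨i, hi⟩ else 0, ?_, ?_⟩
    · obtain ⟨i, hi⟩ := Function.ne_iff.mp hv0
      exact ⟨i, i.2, by simpa using hi⟩
    · intro j hj
      have := congrFun hv ⟨j, hj⟩
      simp only [Matrix.vecMul, dotProduct, hankel, Matrix.of_apply, Pi.zero_apply] at this
      rw [Finset.sum_range, ← this]
      simp
  obtain ⟨v, ⟨i0, hi0, hvi0⟩, hv⟩ := ker (N + 1) (by omega)
  have hvN : v N ≠ 0 := by
    intro h0
    have hz := key v (fun j hj => by
      have := hv j (by omega)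
      rwa [Finset.sum_range_succ, h0, zero_mul, add_zero] at this)
    rcases Nat.lt_succ_iff_lt_or_eq.mp hi0 with h1 | h1
    · exact hvi0 (hz i0 h1)
    · exact hvi0 (h1 ▸ h0)
  set b : ℕ → ℚ := fun n => ∑ k ∈ Finset.range (N + 1), v k * a (n + k) with hb
  have hb0 : ∀ n, b n = 0 := by
    intro n
    induction n using Nat.strong_induction_on with
    | _ s ih =>
      by_cases hs : s ≤ N
      · have := hv s (by omega)
        rw [← this, hb]
        exact Finset.sum_congr rfl fun k _ => by rw [add_comm]
      push Not at hs
      by_contra hbs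
      obtain ⟨w, ⟨i, hi, hwi⟩, hw⟩ := ker (s + 1) (by omega)
      have hwb : ∀ l ≤ s - N, ∑ i ∈ Finset.range (s + 1), w i * b (i + l) = 0 := by
        intro l hl
        simp only [hb, Finset.mul_sum]
        rw [Finset.sum_comm]
        refine Finset.sum_eq_zero fun k hk => ?_
        have hk' := Finset.mem_range.mp hk
        have := hw (l + k) (by omega)
        rw [← mul_zero (v k), ← this, Finset.mul_sum]
        refine Finset.sum_congr rfl fun i _ => ?_
        rw [add_assoc]; ring
      have hwz : ∀ l ≤ s - N, w (s - l) = 0 := by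
        intro l
        induction l using Nat.strong_induction_on with
        | _ l ihl =>
          intro hl
          have h1 := hwb l hl
          rw [Finset.sum_eq_single (s - l)] at h1
          · rw [show s - l + l = s by omega] at h1
            exact (mul_eq_zero.mp h1).resolve_right hbs
          · intro i hi hne
            have hi' := Finset.mem_range.mp hi
            rcases lt_or_gt_of_ne hne with h2 | h2
            · rw [ih (i + l) (by omega), mul_zero]
            · have := ihl (s - i) (by omega) (by omega)
              rw [show s - (s - i) = i by omega] at this
              rw [this, zero_mul]
          · intro h2
            exact absurd (Finset.mem_range.mpr (by omega)) h2
      have hwN : ∀ i, N ≤ i → i ≤ s → w i = 0 := by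
        intro i h1 h2
        have := hwz (s - i) (by omega)
        rwa [show s - (s - i) = i by omega] at this
      have hz := key w (fun j hj => by
        rw [← hw j (by omega)]
        refine Finset.sum_subset (fun x hx => ?_) (fun x hx hx' => ?_)
        · simp only [Finset.mem_range] at *; omega
        · simp only [Finset.mem_range] at *
          rw [hwN x (by omega) (by omega), zero_mul])
      by_cases h3 : i < N
      · exact hwi (hz i h3)
      · exact hwi (hwN i (by omega) (by omega))
  refine rational_of_recurrence a N (fun k => (v N)⁻¹ * v k) (by field_simp) fun n => ?_
  have := hb0 n
  simp only [mul_assoc, ← Finset.mul_sum]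
  rw [← hb] at *
  rw [show (∑ k ∈ Finset.range (N + 1), v k * a (n + k)) = b n from rfl, this, mul_zero]

/-- Kronecker's criterion. -/
theorem kronecker (a : ℕ → ℚ) (N₀ : ℕ) (h : ∀ M, N₀ ≤ M → (hankel a M).det = 0) :
    ∃ A B : Polynomial ℚ, B ≠ 0 ∧
      (B : PowerSeries ℚ) * PowerSeries.mk a = (A : PowerSeries ℚ) := by
  classical
  have hex : ∃ N, (hankel a N).det ≠ 0 := ⟨0, by simp⟩
  have hlt : ∀ N, (hankel a N).det ≠ 0 → N ≤ N₀ := by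
    intro N hN
    by_contra hc
    exact hN (h N (by omega))
  set N := Nat.findGreatest (fun N => (hankel a N).det ≠ 0) N₀ with hNdef
  have hN : (hankel a N).det ≠ 0 :=
    Nat.findGreatest_spec (P := fun N => (hankel a N).det ≠ 0) (Nat.zero_le N₀) (by simp)
  refine kronecker_step a N hN fun M hM => ?_
  by_contra hc
  exact absurd (Nat.le_findGreatest (P := fun N => (hankel a N).det ≠ 0) (hlt M hc) hc) (by omega)

end FVec


namespace FVec

section adj
open Polynomial

variable {R : Type*} [CommRing R] (ϖ : R) (B : ℕ)

/-- coefficients of `f` beyond `c` are more and more divisible by `ϖ ^ B` -/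
def QC (c : ℕ) (f : R[X]) : Prop := ∀ j, ϖ ^ (B * (j - c)) ∣ f.coeff j

variable {ϖ B}

theorem QC.mono {c c' : ℕ} (h : c ≤ c') {f : R[X]} (hf : QC ϖ B c f) : QC ϖ B c' f := fun j =>
  (pow_dvd_pow ϖ (Nat.mul_le_mul_left B (by omega))).trans (hf j)

theorem QC.mul {c c' : ℕ} {f g : R[X]} (hf : QC ϖ B c f) (hg : QC ϖ B c' g) :
    QC ϖ B (c + c') (f * g) := by
  intro j
  rw [Polynomial.coeff_mul]
  refine Finset.dvd_sum fun x hx => ?_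
  have hx' := Finset.HasAntidiagonal.mem_antidiagonal.mp hx
  refine dvd_trans ?_ (mul_dvd_mul (hf x.1) (hg x.2))
  rw [← pow_add, ← mul_add]
  exact pow_dvd_pow ϖ (Nat.mul_le_mul_left B (by omega))

theorem QC.C (r : R) : QC ϖ B 0 (Polynomial.C r) := by
  intro j
  rw [Polynomial.coeff_C]
  split_ifs with h
  · simp [h]
  · exact dvd_zero _

theorem QC.prod {α : Type*} (s : Finset α) (c : α → ℕ) (f : α → R[X])
    (h : ∀ i ∈ s, QC ϖ B (c i) (f i)) : QC ϖ B (∑ i ∈ s, c i) (∏ i ∈ s, f i) := by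
  classical
  induction s using Finset.induction_on with
  | empty => simpa using QC.C (ϖ := ϖ) (B := B) (1 : R)
  | insert a s ha ih =>
    rw [Finset.sum_insert ha, Finset.prod_insert ha]
    exact (h a (by simp)).mul (ih fun i hi => h i (by simp [hi]))

theorem QC.sum {α : Type*} (s : Finset α) (c : ℕ) (f : α → R[X])
    (h : ∀ i ∈ s, QC ϖ B c (f i)) : QC ϖ B c (∑ i ∈ s, f i) := by
  intro j
  rw [Polynomial.finsetSum_coeff]
  exact Finset.dvd_sum fun i hi => h i hi j

variable {ι : Type*} [Fintype ι] [DecidableEq ι]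

/-- `1 - t A` -/
noncomputable def oneSub (A : Matrix ι ι R) : Matrix ι ι R[X] := 1 - (X : R[X]) • A.map Polynomial.C

theorem oneSub_apply (A : Matrix ι ι R) (i j : ι) :
    oneSub A i j = Polynomial.C ((1 : Matrix ι ι R) i j) - X * Polynomial.C (A i j) := by
  simp [oneSub, Matrix.one_apply, apply_ite Polynomial.C]

theorem QC.adj (A : Matrix ι ι R) (T : Finset ι) (hT : ∀ i ∉ T, ∀ j, ϖ ^ B ∣ A i j) (i j : ι) :
    QC ϖ B T.card ((oneSub A).adjugate i j) := by
  rw [Matrix.adjugate_apply, Matrix.det_apply]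
  refine QC.sum _ _ _ fun σ _ => ?_
  have hent : ∀ r k, QC ϖ B (if r ∈ T then 1 else 0)
      ((oneSub A).updateRow j (Pi.single i 1) r k) := by
    intro r k
    by_cases hr : r = j
    · subst hr
      rw [Matrix.updateRow_self]
      refine QC.mono (Nat.zero_le _) ?_
      by_cases hk : k = i
      · subst hk; simpa using QC.C (ϖ := ϖ) (B := B) (1 : R)
      · simpa [hk] using QC.C (ϖ := ϖ) (B := B) (0 : R)
    · rw [Matrix.updateRow_ne hr, oneSub_apply]
      intro m
      rcases m with _ | _ | m
      · simp
      · by_cases hrT : r ∈ T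
        · simp [hrT]
        · simpa [hrT, Polynomial.coeff_C] using hT r hrT k
      · simp [Polynomial.coeff_C]
  have hp : QC ϖ B T.card (∏ k, (oneSub A).updateRow j (Pi.single i 1) (σ k) k) := by
    have := QC.prod Finset.univ (fun k => if σ k ∈ T then 1 else 0)
      (fun k => (oneSub A).updateRow j (Pi.single i 1) (σ k) k) (fun k _ => hent (σ k) k)
    rwa [Equiv.sum_comp σ (fun k => if k ∈ T then 1 else 0), Finset.sum_boole,
      Finset.filter_univ_mem] at this
  intro m
  rw [Units.smul_def, zsmul_eq_mul, ← Polynomial.C_eq_intCast, Polynomial.coeff_C_mul]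
  exact (hp m).mul_left _

/-- coefficients of the adjugate -/
noncomputable def adjC (A : Matrix ι ι R) (j : ℕ) : Matrix ι ι R :=
  Matrix.of fun i k => ((oneSub A).adjugate i k).coeff j

theorem adjC_zero (A : Matrix ι ι R) : adjC A 0 = (oneSub A).det.coeff 0 • (1 : Matrix ι ι R) := by
  ext i k
  have h := congrFun (congrFun (Matrix.adjugate_mul (oneSub A)) i) k
  have h' := congrArg (fun f => Polynomial.coeff f 0) h
  simp only [Matrix.mul_apply, Polynomial.finsetSum_coeff, Matrix.smul_apply, oneSub_apply,
    Polynomial.mul_coeff_zero] at h'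
  simp only [Polynomial.coeff_sub, Polynomial.coeff_C_zero, Polynomial.mul_coeff_zero,
    Polynomial.coeff_X_zero, zero_mul, sub_zero] at h'
  rw [Matrix.smul_apply, smul_eq_mul]
  have h2 : (adjC A 0 * (1 : Matrix ι ι R)) i k = _ := h'
  rw [mul_one] at h2
  rw [h2]
  by_cases hik : i = k
  · subst hik; simp
  · simp [hik]

theorem adjC_succ (A : Matrix ι ι R) (j : ℕ) :
    adjC A (j + 1) = adjC A j * A + (oneSub A).det.coeff (j + 1) • (1 : Matrix ι ι R) := by
  ext i k
  have h := congrFun (congrFun (Matrix.adjugate_mul (oneSub A)) i) k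
  have h' := congrArg (fun f => Polynomial.coeff f (j + 1)) h
  simp only [Matrix.mul_apply, Polynomial.finsetSum_coeff, Matrix.smul_apply, oneSub_apply,
    mul_sub, Polynomial.coeff_sub, Polynomial.coeff_mul_C, Finset.sum_sub_distrib,
    ← mul_assoc, Polynomial.coeff_mul_X] at h'
  have h1 : ∑ x, ((oneSub A).adjugate i x).coeff (j + 1) * (1 : Matrix ι ι R) x k
      = adjC A (j + 1) i k := by
    have : (adjC A (j + 1) * (1 : Matrix ι ι R)) i k = _ := Matrix.mul_apply
    rw [mul_one] at this
    exact this.symm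
  rw [h1, sub_eq_iff_eq_add] at h'
  rw [h', Matrix.add_apply, Matrix.mul_apply, add_comm]
  congr 1
  rw [Matrix.smul_apply, smul_eq_mul]
  by_cases hik : i = k
  · subst hik; simp
  · simp [hik]

theorem det_oneSub_zero (A : Matrix ι ι R) : (oneSub A).det.coeff 0 = 1 := by
  rw [Polynomial.coeff_zero_eq_eval_zero, ← Polynomial.coe_evalRingHom, RingHom.map_det]
  have : (Polynomial.evalRingHom (0 : R)).mapMatrix (oneSub A) = 1 := by
    ext i j
    simp [oneSub_apply]
  rw [this, Matrix.det_one]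

theorem adjC_eq (A : Matrix ι ι R) (j : ℕ) :
    adjC A j = ∑ k ∈ Finset.range (j + 1), (oneSub A).det.coeff (j - k) • A ^ k := by
  induction j with
  | zero => rw [adjC_zero]; simp
  | succ j ih =>
    rw [adjC_succ, ih, Finset.sum_range_succ' _ (j + 1), Finset.sum_mul]
    congr 1
    refine Finset.sum_congr rfl fun k hk => ?_
    rw [Matrix.smul_mul, ← pow_succ]
    congr 2
    omega

theorem det_dvd_of_col {n : ℕ} (M : Matrix (Fin n) (Fin n) R) (x : Fin n → R)
    (h : ∀ i j, x j ∣ M i j) : ∏ j, x j ∣ M.det := by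
  rw [Matrix.det_apply]
  refine Finset.dvd_sum fun σ _ => ?_
  rw [Units.smul_def, zsmul_eq_mul]
  exact (Finset.prod_dvd_prod_of_dvd _ _ fun j _ => h _ _).mul_left _

theorem hankel_dvd (S A : Matrix ι ι R) (T : Finset ι) (hT : ∀ i ∉ T, ∀ j, ϖ ^ B ∣ A i j)
    (N : ℕ) : ϖ ^ (∑ j ∈ Finset.range N, B * (j - T.card)) ∣
      (hankel (fun m => (S * A ^ (m + 1)).trace) N).det := by
  set c : ℕ → R := fun k => (oneSub A).det.coeff k with hc
  let U : Matrix (Fin N) (Fin N) R := Matrix.of fun k j => if k ≤ j then c (j - k) else 0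
  have hU : U.det = 1 := by
    have htri : U.BlockTriangular id := by
      intro i j hij
      simp only [id] at hij
      simp [U, not_le.mpr hij]
    rw [Matrix.det_of_isUpperTriangular htri]
    simp [U, hc, det_oneSub_zero]
  have hmul : (hankel (fun m => (S * A ^ (m + 1)).trace) N).det =
      (hankel (fun m => (S * A ^ (m + 1)).trace) N * U).det := by
    rw [Matrix.det_mul, hU, mul_one]
  rw [hmul, Finset.sum_range, ← Finset.prod_pow_eq_pow_sum]
  refine det_dvd_of_col _ _ fun i j => ?_
  have hent : (hankel (fun m => (S * A ^ (m + 1)).trace) N * U) i j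
      = (S * A ^ ((i : ℕ) + 1) * adjC A j).trace := by
    rw [adjC_eq, Matrix.mul_sum, Matrix.trace_sum, Matrix.mul_apply]
    simp only [hankel, U, Matrix.of_apply, mul_ite, mul_zero]
    rw [← Finset.sum_filter]
    rw [Finset.sum_range fun k => (S * A ^ ((i : ℕ) + 1) * ((oneSub A).det.coeff (j - k) • A ^ k)).trace]
    refine Finset.sum_bij' (fun k hk => ⟨k, by
        have := (Finset.mem_filter.mp hk).2
        have : (k : ℕ) ≤ j := this
        omega⟩) (fun k _ => ⟨k, by omega⟩) ?_ ?_ ?_ ?_ ?_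
    · intros; simp
    · intro k _
      simp only [Finset.mem_filter, Finset.mem_univ, true_and]
      exact Nat.lt_succ_iff.mp k.2
    · intros; rfl
    · intros; rfl
    · intro k _
      simp only [Matrix.mul_smul, Matrix.trace_smul, smul_eq_mul, mul_assoc, ← pow_add, hc]
      rw [mul_comm, show (i : ℕ) + k + 1 = i + 1 + k by ring]
  rw [hent, Matrix.trace]
  refine Finset.dvd_sum fun k _ => ?_
  rw [Matrix.diag_apply, Matrix.mul_apply]
  exact Finset.dvd_sum fun l _ => (QC.adj A T hT l k j).mul_left _

end adj

end FVec


namespace FVec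

section good

variable {R : Type*} [CommRing R]

/-- Sequences which are, to any precision, traces `Tr (S A^m)` of uniformly compact matrices. -/
def Good (ϖ : R) (a : ℕ → R) : Prop :=
  ∀ B : ℕ, ∃ C : ℕ, ∀ K : ℕ, ∃ (ι : Type) (_ : Fintype ι) (_ : DecidableEq ι)
    (S A : Matrix ι ι R) (T : Finset ι), T.card ≤ C ∧ (∀ i ∉ T, ∀ j, ϖ ^ B ∣ A i j) ∧
      ∀ m, 1 ≤ m → ϖ ^ K ∣ a m - (S * A ^ m).trace

variable {ϖ : R}

theorem Good.zero : Good ϖ (fun _ => 0) := fun B => ⟨0, fun K =>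
  ⟨Empty, inferInstance, inferInstance, 0, 0, ∅, by simp, by simp, by simp [Matrix.trace]⟩⟩

theorem fromBlocks_pow {ι κ : Type*} [Fintype ι] [DecidableEq ι] [Fintype κ] [DecidableEq κ]
    (A : Matrix ι ι R) (B : Matrix κ κ R) (m : ℕ) :
    (Matrix.fromBlocks A 0 0 B) ^ m = Matrix.fromBlocks (A ^ m) 0 0 (B ^ m) := by
  induction m with
  | zero => simp
  | succ m ih => rw [pow_succ, ih, Matrix.fromBlocks_multiply]; simp [pow_succ]

theorem Good.add {a b : ℕ → R} (ha : Good ϖ a) (hb : Good ϖ b) :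
    Good ϖ (fun m => a m + b m) := by
  intro B
  obtain ⟨C₁, h₁⟩ := ha B
  obtain ⟨C₂, h₂⟩ := hb B
  refine ⟨C₁ + C₂, fun K => ?_⟩
  obtain ⟨ι₁, i1, i2, S₁, A₁, T₁, hc₁, hd₁, he₁⟩ := h₁ K
  obtain ⟨ι₂, j1, j2, S₂, A₂, T₂, hc₂, hd₂, he₂⟩ := h₂ K
  refine ⟨ι₁ ⊕ ι₂, inferInstance, inferInstance, Matrix.fromBlocks S₁ 0 0 S₂,
    Matrix.fromBlocks A₁ 0 0 A₂, T₁.disjSum T₂, ?_, ?_, ?_⟩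
  · rw [Finset.card_disjSum]; omega
  · rintro (i | i) hi (j | j)
    · exact hd₁ i (by simpa using hi) j
    · simp
    · simp
    · exact hd₂ i (by simpa using hi) j
  · intro m hm
    rw [fromBlocks_pow, Matrix.fromBlocks_multiply]
    simp only [Matrix.zero_mul, Matrix.mul_zero, add_zero, zero_add]
    have htr : (Matrix.fromBlocks (S₁ * A₁ ^ m) 0 0 (S₂ * A₂ ^ m)).trace
        = (S₁ * A₁ ^ m).trace + (S₂ * A₂ ^ m).trace := by
      simp [Matrix.trace]
    rw [htr, add_sub_add_comm]
    exact dvd_add (he₁ m hm) (he₂ m hm)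

theorem Good.sum {α : Type*} (s : Finset α) (a : α → ℕ → R) (h : ∀ i ∈ s, Good ϖ (a i)) :
    Good ϖ (fun m => ∑ i ∈ s, a i m) := by
  classical
  induction s using Finset.induction_on with
  | empty => simpa using Good.zero
  | insert x s hx ih =>
    simp only [Finset.sum_insert hx]
    exact (h x (by simp)).add (ih fun i hi => h i (by simp [hi]))

theorem Good.scale {a : ℕ → R} (ha : Good ϖ a) (c d : R) :
    Good ϖ (fun m => c * d ^ m * a m) := by
  intro B
  obtain ⟨C, h⟩ := ha B
  refine ⟨C, fun K => ?_⟩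
  obtain ⟨ι₁, i1, i2, S₁, A₁, T₁, hc₁, hd₁, he₁⟩ := h K
  refine ⟨ι₁, i1, i2, c • S₁, d • A₁, T₁, hc₁, fun i hi j => ?_, fun m hm => ?_⟩
  · rw [Matrix.smul_apply]
    exact (hd₁ i hi j).mul_left _
  · rw [smul_pow, Matrix.smul_mul, Matrix.mul_smul, smul_smul, Matrix.trace_smul, smul_eq_mul,
      ← mul_sub]
    exact (he₁ m hm).mul_left _

theorem Good.congr {a b : ℕ → R} (ha : Good ϖ a) (h : ∀ m, 1 ≤ m → a m = b m) : Good ϖ b := by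
  intro B
  obtain ⟨C, hC⟩ := ha B
  refine ⟨C, fun K => ?_⟩
  obtain ⟨ι₁, i1, i2, S₁, A₁, T₁, hc₁, hd₁, he₁⟩ := hC K
  exact ⟨ι₁, i1, i2, S₁, A₁, T₁, hc₁, hd₁, fun m hm => h m hm ▸ he₁ m hm⟩

theorem sum_lower (C N : ℕ) (h : 4 * C + 2 ≤ N) : N ^ 2 ≤ 4 * ∑ j ∈ Finset.range N, (j - C) := by
  have h1 : ∑ j ∈ Finset.range N, j ≤ ∑ j ∈ Finset.range N, (j - C) + N * C := by
    rw [← smul_eq_mul, ← Finset.card_range N, ← Finset.sum_const, Finset.card_range,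
      ← Finset.sum_add_distrib]
    exact Finset.sum_le_sum fun j _ => by omega
  have h2 := Finset.sum_range_id_mul_two N
  obtain ⟨k, rfl⟩ : ∃ k, N = k + 1 := ⟨N - 1, by omega⟩
  simp only [Nat.add_sub_cancel] at h2
  nlinarith

theorem hankel_congr (x : R) (a b : ℕ → R) (N : ℕ) (h : ∀ m, x ∣ a m - b m)
    (hb : x ∣ (hankel b N).det) : x ∣ (hankel a N).det := by
  have hq : ∀ y : R, x ∣ y ↔ Ideal.Quotient.mk (Ideal.span {x}) y = 0 := fun y => by
    rw [Ideal.Quotient.eq_zero_iff_mem, Ideal.mem_span_singleton]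
  rw [hq, RingHom.map_det] at *
  rw [← hb]
  congr 1
  ext i j
  simp only [RingHom.mapMatrix_apply, Matrix.map_apply, hankel, Matrix.of_apply]
  rw [← sub_eq_zero, ← map_sub, ← hq]
  exact h _

theorem good_hankel (p : ℕ) (hp : p.Prime) (hϖ : (p : R) ∣ ϖ ^ p)
    (hdesc : ∀ (M : ℕ) (n : ℤ), (p : R) ^ M ∣ (n : R) → (p : ℤ) ^ M ∣ n)
    (b : ℕ → ℤ) (c : ℕ) (hc : 1 ≤ c) (hb : ∀ m, |b m| ≤ (c : ℤ) ^ m)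
    (hg : Good ϖ (fun m => (b m : R))) :
    ∃ N₀, ∀ N, N₀ ≤ N → (hankel (fun m => b (m + 1)) N).det = 0 := by
  set s := 2 * c ^ 2 with hs
  obtain ⟨C, hC⟩ := hg (4 * p * (s + 1))
  refine ⟨4 * C + 2, fun N hN => ?_⟩
  set V := ∑ j ∈ Finset.range N, 4 * p * (s + 1) * (j - C) with hV
  have hVle : p * ((s + 1) * N ^ 2) ≤ V := by
    rw [hV, ← Finset.mul_sum]
    have := sum_lower C N hN
    calc p * ((s + 1) * N ^ 2) ≤ p * ((s + 1) * (4 * ∑ j ∈ Finset.range N, (j - C))) := by gcongr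
      _ = _ := by ring
  obtain ⟨ι, i1, i2, S, A, T, hT, hd, he⟩ := hC V
  have h1 : ϖ ^ V ∣ (hankel (fun m => (S * A ^ (m + 1)).trace) N).det := by
    refine dvd_trans (pow_dvd_pow ϖ ?_) (hankel_dvd S A T hd N)
    exact Finset.sum_le_sum fun j _ => Nat.mul_le_mul_left _ (by omega)
  have h2 : ϖ ^ V ∣ (hankel (fun m => (b (m + 1) : R)) N).det :=
    hankel_congr _ _ _ N (fun m => he (m + 1) (by omega)) h1
  have h3 : (hankel (fun m => (b (m + 1) : R)) N).det
      = ((hankel (fun m => b (m + 1)) N).det : R) := by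
    refine Eq.trans ?_ (RingHom.map_det (Int.castRingHom R) _).symm
    rfl
  rw [h3] at h2
  have h4 : (p : ℤ) ^ ((s + 1) * N ^ 2) ∣ (hankel (fun m => b (m + 1)) N).det := by
    apply hdesc
    refine dvd_trans ?_ h2
    refine dvd_trans ?_ (pow_dvd_pow ϖ hVle)
    rw [pow_mul ϖ]
    exact pow_dvd_pow_of_dvd hϖ _
  refine Int.eq_zero_of_abs_lt_dvd h4 ?_
  have hcz : (1 : ℤ) ≤ c := by exact_mod_cast hc
  have h5 := Matrix.det_le (A := hankel (fun m => b (m + 1)) N)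
    (abv := (AbsoluteValue.abs : AbsoluteValue ℤ ℤ)) (x := (c : ℤ) ^ (2 * N)) (fun i j => by
      simp only [hankel, Matrix.of_apply, AbsoluteValue.abs_apply]
      exact (hb _).trans (pow_le_pow_right₀ hcz (by omega)))
  simp only [AbsoluteValue.abs_apply, Fintype.card_fin, nsmul_eq_mul] at h5
  refine lt_of_le_of_lt h5 ?_
  have h6 : N.factorial * (c ^ (2 * N)) ^ N < p ^ ((s + 1) * N ^ 2) := by
    calc N.factorial * (c ^ (2 * N)) ^ N ≤ (2 ^ N) ^ N * (c ^ (2 * N)) ^ N := by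
          gcongr
          exact (Nat.factorial_le_pow N).trans (Nat.pow_le_pow_left Nat.lt_two_pow_self.le N)
      _ = s ^ (N ^ 2) := by rw [hs, mul_pow]; ring
      _ ≤ (p ^ s) ^ (N ^ 2) := by
          gcongr
          exact (Nat.lt_pow_self hp.one_lt).le
      _ = p ^ (s * N ^ 2) := by rw [← pow_mul]
      _ < _ := by
          apply Nat.pow_lt_pow_right hp.one_lt
          have : 0 < N ^ 2 := Nat.pow_pos (by omega)
          nlinarith
  exact_mod_cast h6

/-- main criterion: integer `Good` sequences with exponential growth have rational series -/
theorem good_rational (p : ℕ) (hp : p.Prime) (hϖ : (p : R) ∣ ϖ ^ p)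
    (hdesc : ∀ (M : ℕ) (n : ℤ), (p : R) ^ M ∣ (n : R) → (p : ℤ) ^ M ∣ n)
    (b : ℕ → ℤ) (c : ℕ) (hc : 1 ≤ c) (hb : ∀ m, |b m| ≤ (c : ℤ) ^ m)
    (hg : Good ϖ (fun m => (b m : R))) :
    ∃ A B : Polynomial ℚ, B ≠ 0 ∧
      (B : PowerSeries ℚ) * PowerSeries.mk (fun m => (b (m + 1) : ℚ)) = (A : PowerSeries ℚ) := by
  obtain ⟨N₀, hN⟩ := good_hankel p hp hϖ hdesc b c hc hb hg
  refine kronecker _ N₀ fun M hM => ?_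
  have h3 : (hankel (fun m => (b (m + 1) : ℚ)) M).det
      = ((hankel (fun m => b (m + 1)) M).det : ℚ) := by
    refine Eq.trans ?_ (RingHom.map_det (Int.castRingHom ℚ) _).symm
    rfl
  rw [h3, hN M hM, Int.cast_zero]

end good

end FVec


namespace FVec

section split

/-- `λ` is the logarithmic derivative (w.r.t. `X d/dX`) of `F` -/
def LD {S : Type*} [CommRing S] (F l : PowerSeries S) : Prop :=
  PowerSeries.X * PowerSeries.derivative S F = l * F

variable {S : Type*} [CommRing S]

theorem LD.coeff {F l : PowerSeries S} (h : LD F l) (n : ℕ) :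
    (n : S) * PowerSeries.coeff n F = PowerSeries.coeff n (l * F) := by
  rw [← h]
  rcases n with _ | n
  · simp
  · rw [PowerSeries.coeff_succ_X_mul, PowerSeries.coeff_derivative]
    push_cast; ring

theorem LD.of_coeff {F l : PowerSeries S}
    (h : ∀ n : ℕ, (n : S) * PowerSeries.coeff n F = PowerSeries.coeff n (l * F)) : LD F l := by
  ext n
  rw [← h n]
  rcases n with _ | n
  · simp
  · rw [PowerSeries.coeff_succ_X_mul, PowerSeries.coeff_derivative]
    push_cast; ring

theorem LD.one : LD (1 : PowerSeries S) 0 := by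
  refine LD.of_coeff fun n => ?_
  rcases n with _ | n <;> simp [PowerSeries.coeff_one]

theorem LD.mul {F G l m : PowerSeries S} (hF : LD F l) (hG : LD G m) : LD (F * G) (l + m) := by
  unfold LD at *
  rw [Derivation.leibniz]
  simp only [smul_eq_mul]
  linear_combination G * hF + F * hG

theorem LD.prod {α : Type*} (s : Finset α) (F l : α → PowerSeries S)
    (h : ∀ i ∈ s, LD (F i) (l i)) : LD (∏ i ∈ s, F i) (∑ i ∈ s, l i) := by
  classical
  induction s using Finset.induction_on with
  | empty => simpa using LD.one
  | insert x s hx ih =>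
    rw [Finset.sum_insert hx, Finset.prod_insert hx]
    exact (h x (by simp)).mul (ih fun i hi => h i (by simp [hi]))

theorem LD.pow {F l : PowerSeries S} (h : LD F l) (k : ℕ) : LD (F ^ k) ((k : PowerSeries S) * l) := by
  have := LD.prod (Finset.range k) (fun _ => F) (fun _ => l) (fun _ _ => h)
  simpa using this

theorem LD.rescale {F l : PowerSeries S} (h : LD F l) (y : S) :
    LD (PowerSeries.rescale y F) (PowerSeries.rescale y l) := by
  refine LD.of_coeff fun n => ?_
  rw [← map_mul, PowerSeries.coeff_rescale, PowerSeries.coeff_rescale, ← h.coeff n]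
  ring

theorem LD.map {S' : Type*} [CommRing S'] (φ : S →+* S') {F l : PowerSeries S} (h : LD F l) :
    LD (PowerSeries.map φ F) (PowerSeries.map φ l) := by
  refine LD.of_coeff fun n => ?_
  rw [← map_mul, PowerSeries.coeff_map, PowerSeries.coeff_map, ← h.coeff n]
  simp

theorem LD.one_sub (n : ℕ) (hn : 0 < n) :
    LD (1 - PowerSeries.X ^ n : PowerSeries ℤ)
      (PowerSeries.mk fun m => if 0 < m ∧ n ∣ m then -(n : ℤ) else 0) := by
  refine LD.of_coeff fun m => ?_
  rw [mul_sub, mul_one, map_sub, map_sub, PowerSeries.coeff_mul_X_pow', PowerSeries.coeff_mk,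
    PowerSeries.coeff_X_pow, PowerSeries.coeff_one]
  by_cases h0 : m = 0
  · subst h0
    simp [hn.ne]
  by_cases hmn : m = n
  · subst hmn
    simp [h0]
  by_cases hle : n ≤ m
  · rw [if_pos hle, PowerSeries.coeff_mk]
    have : n ∣ m - n ↔ n ∣ m := by
      rw [Nat.dvd_sub_iff_left hle (dvd_refl n)]
    simp only [this, h0, hmn, if_false]
    have h1 : 0 < m := by omega
    have h2 : 0 < m - n := by omega
    simp [h1, h2]
  · have : ¬ n ∣ m := fun hd => hle (Nat.le_of_dvd (by omega) hd)
    simp [h0, hmn, hle, this]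

open scoped Classical in
theorem sum_moebius (p : ℕ) (hp : p.Prime) (m : ℕ) (hm : 0 < m) :
    ∑ n ∈ m.divisors.filter (fun n => ¬ p ∣ n), ArithmeticFunction.moebius n
      = if ∃ i, m = p ^ i then 1 else 0 := by
  set m' := m / p ^ m.factorization p with hm'
  have hmm : p ^ m.factorization p * m' = m := Nat.ordProj_mul_ordCompl_eq_self m p
  have hcop : Nat.Coprime p m' := Nat.coprime_ordCompl hp hm.ne'
  have hm'0 : m' ≠ 0 := (Nat.ordCompl_pos p hm.ne').ne'
  have hset : m.divisors.filter (fun n => ¬ p ∣ n) = m'.divisors := by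
    ext n
    simp only [Finset.mem_filter, Nat.mem_divisors]
    constructor
    · rintro ⟨⟨h1, h2⟩, h3⟩
      refine ⟨?_, hm'0⟩
      have hc : Nat.Coprime n (p ^ m.factorization p) :=
        ((hp.coprime_iff_not_dvd.mpr h3).symm).pow_right _
      rw [← hmm] at h1
      exact hc.dvd_of_dvd_mul_left h1
    · rintro ⟨h1, h2⟩
      refine ⟨⟨h1.trans ⟨_, by rw [mul_comm]; exact hmm.symm⟩, hm.ne'⟩, fun h3 => ?_⟩
      exact hp.one_lt.ne' (Nat.Coprime.eq_one_of_dvd hcop (h3.trans h1))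
  rw [hset]
  have h1 : (ArithmeticFunction.moebius * (ArithmeticFunction.zeta : ArithmeticFunction ℤ)) m'
      = (1 : ArithmeticFunction ℤ) m' := by rw [ArithmeticFunction.moebius_mul_coe_zeta]
  rw [ArithmeticFunction.coe_mul_zeta_apply, ArithmeticFunction.one_apply] at h1
  rw [h1]
  have : m' = 1 ↔ ∃ i, m = p ^ i := by
    constructor
    · intro h; exact ⟨_, by rw [← hmm, h, mul_one]⟩
    · rintro ⟨i, hi⟩
      have : m' ∣ p ^ i := hi ▸ ⟨_, by rw [mul_comm]; exact hmm.symm⟩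
      exact Nat.Coprime.eq_one_of_dvd (hcop.symm.pow_right i) this
  simp only [this]

theorem exists_nat_inv (p : ℕ) (hp : p.Prime) (M n : ℕ) (hn : ¬ p ∣ n) (t : ℤ) :
    ∃ k : ℕ, (p : ℤ) ^ M ∣ (k : ℤ) * n - t := by
  have hc : IsCoprime (n : ℤ) ((p : ℤ) ^ M) := by
    apply IsCoprime.pow_right
    rw [Nat.isCoprime_iff_coprime]
    exact (hp.coprime_iff_not_dvd.mpr hn).symm
  obtain ⟨u, v, huv⟩ := hc
  have hpos : (0 : ℤ) < (p : ℤ) ^ M := by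
    have := hp.pos
    positivity
  refine ⟨((u * t) % (p : ℤ) ^ M).toNat, ?_⟩
  rw [Int.toNat_of_nonneg (Int.emod_nonneg _ hpos.ne')]
  rw [Int.emod_def]
  refine ⟨-(v * t) - (u * t / (p : ℤ) ^ M) * n, ?_⟩
  linear_combination t * huv

open scoped Classical in
/-- approximate Artin–Hasse exponential, an integral polynomial -/
theorem exists_artinHasse (p : ℕ) (hp : p.Prime) (M K : ℕ) :
    ∃ (E : Polynomial ℤ) (L : PowerSeries ℤ), E.coeff 0 = 1 ∧ LD (E : PowerSeries ℤ) L ∧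
      PowerSeries.coeff 0 L = 0 ∧ ∀ m, 0 < m → m < K →
        (p : ℤ) ^ M ∣ PowerSeries.coeff m L - (if ∃ i, m = p ^ i then 1 else 0) := by
  have hk : ∀ n : ℕ, ∃ k : ℕ, ¬ p ∣ n →
      (p : ℤ) ^ M ∣ (k : ℤ) * n - (-ArithmeticFunction.moebius n) := by
    intro n
    by_cases h : p ∣ n
    · exact ⟨0, fun h' => absurd h h'⟩
    · obtain ⟨k, hk⟩ := exists_nat_inv p hp M n h (-ArithmeticFunction.moebius n)
      exact ⟨k, fun _ => hk⟩
  choose k hk using hk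
  set s := (Finset.range K).filter (fun n => 0 < n ∧ ¬ p ∣ n) with hs
  set l : ℕ → PowerSeries ℤ := fun n =>
    PowerSeries.mk fun m => if 0 < m ∧ n ∣ m then -(n : ℤ) else 0 with hl
  refine ⟨∏ n ∈ s, (1 - Polynomial.X ^ n) ^ k n, ∑ n ∈ s, (k n : PowerSeries ℤ) * l n,
    ?_, ?_, ?_, ?_⟩
  · rw [Polynomial.coeff_zero_eq_eval_zero, Polynomial.eval_prod]
    refine Finset.prod_eq_one fun n hn => ?_
    have : n ≠ 0 := by
      have := (Finset.mem_filter.mp hn).2.1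
      omega
    simp [this]
  · have : ((∏ n ∈ s, (1 - Polynomial.X ^ n) ^ k n : Polynomial ℤ) : PowerSeries ℤ)
        = ∏ n ∈ s, (1 - PowerSeries.X ^ n) ^ k n := by
      rw [← Polynomial.coeToPowerSeries.ringHom_apply, map_prod]
      simp
    rw [this]
    refine LD.prod _ _ _ fun n hn => ?_
    exact (LD.one_sub n (Finset.mem_filter.mp hn).2.1).pow _
  · rw [map_sum]
    refine Finset.sum_eq_zero fun n _ => ?_
    simp [hl]
  · intro m hm hmK
    have h1 : PowerSeries.coeff m (∑ n ∈ s, (k n : PowerSeries ℤ) * l n)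
        = ∑ n ∈ m.divisors.filter (fun n => ¬ p ∣ n), (k n : ℤ) * (-(n : ℤ)) := by
      rw [map_sum]
      have h2 : ∀ n ∈ s, PowerSeries.coeff m ((k n : PowerSeries ℤ) * l n)
          = if n ∣ m then (k n : ℤ) * (-(n : ℤ)) else 0 := by
        intro n _
        have : (k n : PowerSeries ℤ) = PowerSeries.C (k n : ℤ) := by simp
        rw [this, PowerSeries.coeff_C_mul, hl, PowerSeries.coeff_mk]
        simp [hm]
      rw [Finset.sum_congr rfl h2, ← Finset.sum_filter]
      refine Finset.sum_congr ?_ fun _ _ => rfl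
      ext n
      simp only [hs, Finset.mem_filter, Finset.mem_range, Nat.mem_divisors]
      constructor
      · rintro ⟨⟨_, _, h3⟩, h4⟩; exact ⟨⟨h4, hm.ne'⟩, h3⟩
      · rintro ⟨⟨h4, _⟩, h3⟩
        exact ⟨⟨(Nat.le_of_dvd hm h4).trans_lt hmK, Nat.pos_of_dvd_of_pos h4 hm, h3⟩, h4⟩
    rw [h1, ← sum_moebius p hp m hm, ← Finset.sum_sub_distrib]
    refine Finset.dvd_sum fun n hn => ?_
    have := hk n (Finset.mem_filter.mp hn).2
    rw [show (k n : ℤ) * (-(n : ℤ)) - ArithmeticFunction.moebius n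
      = -((k n : ℤ) * n - (-ArithmeticFunction.moebius n)) by ring]
    exact this.neg_right

theorem LD.compare {x : S} {F G l m : PowerSeries S} (hF : LD F l) (hG : LD G m)
    (hF0 : PowerSeries.coeff 0 F = 1) (hG0 : PowerSeries.coeff 0 G = 1)
    (hl : PowerSeries.coeff 0 l = 0) (hm : PowerSeries.coeff 0 m = 0) (K : ℕ)
    (h : ∀ n < K, x ∣ PowerSeries.coeff n l - PowerSeries.coeff n m) (n : ℕ) (hn : n < K) :
    x ∣ (n.factorial : S) * (PowerSeries.coeff n F - PowerSeries.coeff n G) := by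
  induction n using Nat.strong_induction_on with
  | _ n ih =>
    rcases n with _ | n
    · simp [hF0, hG0]
    have h1 : ((n + 1).factorial : S) *
        (PowerSeries.coeff (n + 1) F - PowerSeries.coeff (n + 1) G)
        = (n.factorial : S) * (PowerSeries.coeff (n + 1) (l * F)
          - PowerSeries.coeff (n + 1) (m * G)) := by
      rw [← hF.coeff, ← hG.coeff, Nat.factorial_succ]
      push_cast; ring
    rw [h1, PowerSeries.coeff_mul, PowerSeries.coeff_mul, ← Finset.sum_sub_distrib, Finset.mul_sum]
    refine Finset.dvd_sum fun y hy => ?_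
    obtain ⟨a, b⟩ := y
    have hab : a + b = n + 1 := Finset.HasAntidiagonal.mem_antidiagonal.mp hy
    simp only
    rcases Nat.eq_zero_or_pos a with rfl | ha
    · simp [hl, hm]
    have h2 := ih b (by omega) (by omega)
    obtain ⟨c, hc⟩ := Nat.factorial_dvd_factorial (show b ≤ n by omega)
    have h3 := h a (by omega)
    rw [show (n.factorial : S) * (PowerSeries.coeff a l * PowerSeries.coeff b F
        - PowerSeries.coeff a m * PowerSeries.coeff b G)
      = (n.factorial : S) * PowerSeries.coeff b F *
          (PowerSeries.coeff a l - PowerSeries.coeff a m)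
        + c * PowerSeries.coeff a m * ((b.factorial : S) *
          (PowerSeries.coeff b F - PowerSeries.coeff b G)) by rw [hc]; push_cast; ring]
    exact dvd_add (h3.mul_left _) (h2.mul_left _)

theorem dvd_of_nat_mul [IsDomain S] (p : ℕ) (hp : p.Prime) (hpS : (p : S) ≠ 0) (k : ℕ)
    (hk : k ≠ 0) (K : ℕ) (δ : S) (h : (p : S) ^ (k + K) ∣ (k : S) * δ) : (p : S) ^ K ∣ δ := by
  obtain ⟨v, k', hk', rfl⟩ := Nat.exists_eq_pow_mul_and_not_dvd hk p hp.ne_one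
  have hv : v ≤ p ^ v * k' := by
    have h1 : v < p ^ v := Nat.lt_pow_self hp.one_lt
    have h2 : 0 < k' := Nat.pos_of_ne_zero fun h => hk' (h ▸ dvd_zero p)
    nlinarith
  have h1 : (p : S) ^ (v + K) ∣ (p : S) ^ v * ((k' : S) * δ) := by
    refine dvd_trans (pow_dvd_pow _ (by omega)) (h.trans (dvd_of_eq ?_))
    push_cast; ring
  rw [pow_add] at h1
  have h2 := (mul_dvd_mul_iff_left (pow_ne_zero v hpS)).mp h1
  have hc : IsCoprime ((p : S) ^ K) (k' : S) := by
    apply IsCoprime.pow_left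
    have := (Nat.isCoprime_iff_coprime.mpr (hp.coprime_iff_not_dvd.mpr hk'))
    simpa using this.map (Int.castRingHom S)
  exact hc.dvd_of_dvd_mul_left h2

theorem sum_frob_shift (y : S) (p f : ℕ) (hy : y ^ p ^ f = y) (i : ℕ) :
    ∑ j ∈ Finset.range f, (y ^ p ^ j) ^ p ^ i = ∑ j ∈ Finset.range f, y ^ p ^ j := by
  induction i with
  | zero => simp
  | succ i ih =>
    rw [← ih]
    have h1 := Finset.sum_range_succ (fun j => (y ^ p ^ j) ^ p ^ i) f
    have h2 := Finset.sum_range_succ' (fun j => (y ^ p ^ j) ^ p ^ i) f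
    rw [h2] at h1
    simp only [hy, pow_zero, pow_one] at h1
    rw [← add_right_cancel h1]
    refine Finset.sum_congr rfl fun j _ => ?_
    rw [← pow_mul, ← pow_mul]
    congr 1
    ring

/-- the splitting identity on the level of coefficients -/
theorem split_coeff [IsDomain S] (p : ℕ) (hp : p.Prime) (hpS : (p : S) ≠ 0) (K : ℕ) :
    ∃ (M : ℕ) (E : Polynomial ℤ), E.coeff 0 = 1 ∧ (2 ≤ K → (p : ℤ) ∣ E.coeff 1 - 1) ∧
      ∀ (y : S) (f : ℕ) (a : ℕ), y ^ p ^ f = y →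
        (p : S) ^ M ∣ ∑ j ∈ Finset.range f, y ^ p ^ j - (a : S) →
        ∀ n < K, (p : S) ^ K ∣ PowerSeries.coeff n
            (∏ j ∈ Finset.range f, PowerSeries.rescale (y ^ p ^ j)
              (PowerSeries.map (Int.castRingHom S) (E : PowerSeries ℤ)))
          - PowerSeries.coeff n ((PowerSeries.map (Int.castRingHom S) (E : PowerSeries ℤ)) ^ a) := by
  set M := K.factorial + K with hM
  obtain ⟨E, L, hE0, hEL, hL0, hL⟩ := exists_artinHasse p hp M K
  refine ⟨M, E, hE0, ?_, ?_⟩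
  · intro hK
    have h1 := hL 1 one_pos (by omega)
    rw [if_pos ⟨0, by simp⟩] at h1
    have h2 := hEL.coeff 1
    rw [PowerSeries.coeff_mul, Finset.Nat.antidiagonal_succ] at h2
    simp [hL0, hE0] at h2
    rw [h2]
    refine dvd_trans (dvd_pow_self _ ?_) h1
    have := K.factorial_pos
    omega
  · intro y f a hy ha n hn
    set ES := PowerSeries.map (Int.castRingHom S) (E : PowerSeries ℤ) with hES
    set LS := PowerSeries.map (Int.castRingHom S) L with hLS
    have hLDE : LD ES LS := hEL.map _
    have hES0 : PowerSeries.coeff 0 ES = 1 := by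
      rw [hES, PowerSeries.coeff_map, Polynomial.coeff_coe, hE0, map_one]
    have hLS0 : PowerSeries.coeff 0 LS = 0 := by
      rw [hLS, PowerSeries.coeff_map, hL0, map_zero]
    have hP := LD.prod (Finset.range f) (fun j => PowerSeries.rescale (y ^ p ^ j) ES)
      (fun j => PowerSeries.rescale (y ^ p ^ j) LS) (fun j _ => hLDE.rescale _)
    have key := LD.compare (x := (p : S) ^ M) hP (hLDE.pow a) (by
        rw [PowerSeries.coeff_zero_eq_constantCoeff_apply, map_prod]
        refine Finset.prod_eq_one fun j _ => ?_
        rw [← PowerSeries.coeff_zero_eq_constantCoeff_apply, PowerSeries.coeff_rescale, hES0]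
        simp) (by
        rw [PowerSeries.coeff_zero_eq_constantCoeff_apply, map_pow,
          ← PowerSeries.coeff_zero_eq_constantCoeff_apply, hES0, one_pow]) (by
        rw [map_sum]
        refine Finset.sum_eq_zero fun j _ => ?_
        rw [PowerSeries.coeff_rescale, hLS0, mul_zero]) (by
        rw [PowerSeries.coeff_zero_eq_constantCoeff_apply, map_mul,
          ← PowerSeries.coeff_zero_eq_constantCoeff_apply LS, hLS0, mul_zero]) K ?_ n hn
    · refine dvd_of_nat_mul p hp hpS K.factorial K.factorial_ne_zero K _ ?_
      obtain ⟨c, hc⟩ := Nat.factorial_dvd_factorial hn.le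
      refine key.trans ⟨c, ?_⟩
      rw [hc]; push_cast; ring
    · intro m hm
      have hcast : (a : PowerSeries S) = PowerSeries.C (a : S) := by simp
      rw [map_sum, hcast, PowerSeries.coeff_C_mul]
      simp only [PowerSeries.coeff_rescale]
      rw [← Finset.sum_mul, ← sub_mul]
      rcases Nat.eq_zero_or_pos m with rfl | hm0
      · simp [hLS0]
      have h1 := map_dvd (Int.castRingHom S) (hL m hm0 hm)
      by_cases hpow : ∃ i, m = p ^ i
      · obtain ⟨i, rfl⟩ := hpow
        rw [sum_frob_shift y p f hy i]
        exact ha.mul_right _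
      · rw [if_neg hpow, sub_zero] at h1
        refine Dvd.dvd.mul_left ?_ _
        simpa [hLS] using h1

end split

end FVec


namespace FVec

section ring

abbrev Om (p : ℕ) [Fact p.Prime] : Type := AlgebraicClosure (ZMod p)

variable (p : ℕ) [Fact p.Prime]

abbrev Wi : Type := WittVector p (Om p)

theorem Wi_dvd_iff (w : Wi p) : (p : Wi p) ∣ w ↔ WittVector.constantCoeff w = 0 := by
  rw [← Ideal.mem_span_singleton, ← RingHom.mem_ker, WittVector.ker_constantCoeff]

theorem Wi_p_ne : (p : Wi p) ≠ 0 := WittVector.p_nonzero p (Om p)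

theorem Wi_desc (M : ℕ) (n : ℤ) (h : (p : Wi p) ^ M ∣ (n : Wi p)) : (p : ℤ) ^ M ∣ n := by
  induction M generalizing n with
  | zero => simp
  | succ M ih =>
    have h1 : (p : Wi p) ∣ (n : Wi p) := (dvd_pow_self _ (by omega)).trans h
    rw [Wi_dvd_iff, map_intCast] at h1
    have h2 : (p : ℤ) ∣ n := (CharP.intCast_eq_zero_iff (Om p) p n).1 h1
    obtain ⟨k, rfl⟩ := h2
    rw [pow_succ']
    refine mul_dvd_mul_left _ (ih k ?_)
    rw [pow_succ'] at h
    push_cast at h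
    exact (mul_dvd_mul_iff_left (Wi_p_ne p)).1 h

/-- Frobenius-fixed Witt vectors are integers modulo every power of `p`. -/
theorem Wi_fixed (M : ℕ) (w : Wi p) (hw : WittVector.frobenius w = w) :
    ∃ a : ℕ, (p : Wi p) ^ M ∣ w - a := by
  suffices ∃ a : ℤ, (p : Wi p) ^ M ∣ w - a by
    obtain ⟨a, ha⟩ := this
    have hp : (0:ℤ) < (p:ℤ) ^ M := by
      have := (Fact.out : p.Prime).pos
      positivity
    refine ⟨(a % (p:ℤ) ^ M).toNat, ?_⟩
    have h0 : ((a % (p:ℤ) ^ M).toNat : Wi p) = ((a % (p:ℤ) ^ M : ℤ) : Wi p) := by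
      have h9 := congrArg (fun z : ℤ => (z : Wi p)) (Int.toNat_of_nonneg (Int.emod_nonneg a hp.ne'))
      rw [← h9]
      exact (Int.cast_natCast _).symm
    rw [h0, Int.emod_def]
    push_cast
    have : w - ((a : Wi p) - (p : Wi p) ^ M * ((a / (p:ℤ)^M : ℤ) : Wi p)) = (w - a) + (p : Wi p) ^ M * ((a / (p:ℤ)^M : ℤ) : Wi p) := by ring
    rw [this]
    exact dvd_add ha (dvd_mul_right _ _)
  induction M generalizing w with
  | zero => exact ⟨0, by simp⟩
  | succ M ih =>
    have h0 : (WittVector.constantCoeff w : Om p) ^ p = WittVector.constantCoeff w := by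
      have := congrArg WittVector.constantCoeff hw
      rw [WittVector.frobenius_eq_map_frobenius] at this
      simpa [WittVector.constantCoeff, WittVector.map_coeff, frobenius_def] using this
    have h1 : (WittVector.constantCoeff w : Om p) ∈ (⊥ : Subfield (Om p)) :=
      (Subfield.mem_bot_iff_pow_eq_self (F := Om p) (p := p)).2 h0
    obtain ⟨n, hn⟩ := (mem_bot_iff_intCast p (Om p) ).1 h1
    have h2 : (p : Wi p) ∣ w - n := by
      rw [Wi_dvd_iff, map_sub, map_intCast, hn, sub_self]
    obtain ⟨v, hv⟩ := h2
    have h3 : WittVector.frobenius v = v := by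
      have := congrArg WittVector.frobenius hv
      rw [map_sub, map_mul, map_intCast, map_natCast, hw, hv] at this
      exact (mul_left_cancel₀ (Wi_p_ne p) this).symm
    obtain ⟨a, ha⟩ := ih v h3
    refine ⟨n + p * a, ?_⟩
    push_cast
    have : w - ((n : Wi p) + p * a) = p * (v - a) := by
      rw [mul_sub, ← hv]; ring
    rw [this, pow_succ']
    exact mul_dvd_mul_left _ ha

theorem teich_trace (f M : ℕ) (x : Om p) (hx : x ^ p ^ f = x) :
    ∃ a : ℕ, (p : Wi p) ^ M ∣ ∑ j ∈ Finset.range f, (WittVector.teichmuller p x) ^ p ^ j - (a : Wi p) := by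
  apply Wi_fixed
  have h : ∀ y : Om p, WittVector.frobenius (WittVector.teichmuller p y) = (WittVector.teichmuller p y) ^ p := by
    intro y
    rw [WittVector.frobenius_eq_map_frobenius, WittVector.map_teichmuller, frobenius_def, map_pow]
  rw [map_sum]
  simp_rw [map_pow, h]
  have h2 : ∀ j, (WittVector.teichmuller p x ^ p) ^ p ^ j = WittVector.teichmuller p x ^ p ^ (j+1) := by
    intro j; rw [← pow_mul, ← pow_succ']
  simp_rw [h2]
  have h3 := Finset.sum_range_succ' (fun j => WittVector.teichmuller p x ^ p ^ j) f
  have h4 := Finset.sum_range_succ (fun j => WittVector.teichmuller p x ^ p ^ j) f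
  rw [h3] at h4
  rw [← map_pow (WittVector.teichmuller p) x (p ^ f), hx] at h4
  simpa using h4

theorem teich_trace' (f M : ℕ) (hM : 1 ≤ M) (x : Om p) (a : ℕ) 
    (ha : (p : Wi p) ^ M ∣ ∑ j ∈ Finset.range f, (WittVector.teichmuller p x) ^ p ^ j - (a : Wi p)) :
    (a : Om p) = ∑ j ∈ Finset.range f, x ^ p ^ j := by
  have h1 := (dvd_pow_self (p : Wi p) (by omega : M ≠ 0)).trans ha
  rw [Wi_dvd_iff, map_sub, map_sum, map_natCast, sub_eq_zero] at h1
  rw [← h1]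
  refine Finset.sum_congr rfl fun j _ => ?_
  rw [map_pow]
  simp [WittVector.constantCoeff, WittVector.teichmuller_coeff_zero]

theorem exists_ring : ∃ (R : Type) (_ : CommRing R) (ι : Wi p →+* R) (ζ : R),
    ∑ i ∈ Finset.range p, ζ ^ i = 0 ∧ (∀ r : R, (p : R) * r = 0 → r = 0) ∧
    ∀ (M : ℕ) (n : ℤ), (p : R) ^ M ∣ (n : R) → (p : ℤ) ^ M ∣ n := by
  have hg := Polynomial.cyclotomic.monic p (Wi p)
  have hdeg : 1 ≤ (Polynomial.cyclotomic p (Wi p)).natDegree := by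
    rw [Polynomial.natDegree_cyclotomic]
    exact Nat.totient_pos.2 (Fact.out : p.Prime).pos
  refine ⟨AdjoinRoot (Polynomial.cyclotomic p (Wi p)), inferInstance, AdjoinRoot.of _,
    AdjoinRoot.root _, ?_, ?_, ?_⟩
  · have : (∑ i ∈ Finset.range p, Polynomial.X ^ i : Polynomial (Wi p)).eval₂
        (AdjoinRoot.of (Polynomial.cyclotomic p (Wi p))) (AdjoinRoot.root _) = 0 := by
      rw [← Polynomial.cyclotomic_prime (Wi p)]
      exact AdjoinRoot.eval₂_root _
    simpa [Polynomial.eval₂_finsetSum] using this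
  · intro r hr
    have h1 := congrArg (AdjoinRoot.modByMonicHom hg) hr
    rw [← nsmul_eq_mul, map_nsmul, map_zero] at h1
    have h2 : AdjoinRoot.modByMonicHom hg r = 0 := by
      rw [nsmul_eq_mul] at h1
      rcases mul_eq_zero.1 h1 with h | h
      · exfalso
        apply Wi_p_ne p
        have := congrArg (Polynomial.coeff · 0) h
        simpa using this
      · exact h
    have := AdjoinRoot.mk_leftInverse hg r
    rw [h2, map_zero] at this
    exact this.symm
  · intro M n ⟨r, hr⟩
    apply Wi_desc p
    have h1 := congrArg (AdjoinRoot.modByMonicHom hg) hr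
    have h2 : ((n : AdjoinRoot (Polynomial.cyclotomic p (Wi p)))) = AdjoinRoot.mk _ (Polynomial.C (n : Wi p)) := by
      simp
    have h3 : (p : AdjoinRoot (Polynomial.cyclotomic p (Wi p))) ^ M * r = ((p ^ M : ℕ)) • r := by
      rw [nsmul_eq_mul]; push_cast; rfl
    rw [h2, h3, map_nsmul, AdjoinRoot.modByMonicHom_mk] at h1
    rw [(Polynomial.modByMonic_eq_self_iff hg).2] at h1
    · have h4 := congrArg (Polynomial.coeff · 0) h1
      refine ⟨(AdjoinRoot.modByMonicHom hg r).coeff 0, ?_⟩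
      simp only [Polynomial.coeff_smul, Polynomial.coeff_C_zero] at h4
      rw [h4, nsmul_eq_mul, Nat.cast_pow]
    · refine lt_of_le_of_lt Polynomial.degree_C_le ?_
      rw [← Polynomial.natDegree_pos_iff_degree_pos]
      exact hdeg

variable {R : Type} [CommRing R] {p}

section zeta
variable {ζ : R}

theorem zeta_pow (hζ : ∑ i ∈ Finset.range p, ζ ^ i = 0) : ζ ^ p = 1 := by
  have := geom_sum_mul ζ p
  rw [hζ, zero_mul] at this
  exact (sub_eq_zero.1 this.symm)

theorem dvd_varpi_pow (hζ : ∑ i ∈ Finset.range p, ζ ^ i = 0) : (p : R) ∣ (ζ - 1) ^ p := by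
  have hp := (Fact.out : p.Prime)
  obtain ⟨r, hr⟩ := exists_add_pow_prime_eq hp (ζ) (-1)
  rw [sub_eq_add_neg, hr, zeta_pow hζ]
  rcases hp.eq_two_or_odd' with h | h
  · subst h
    refine dvd_add ⟨1, by norm_num⟩ ⟨ζ * (-1) * r, by ring⟩
  · rw [h.neg_one_pow]
    exact ⟨ζ * (-1) * r, by ring⟩

theorem varpi_dvd (hζ : ∑ i ∈ Finset.range p, ζ ^ i = 0) : (ζ - 1) ∣ (p : R) := by
  have h : ∀ i ∈ Finset.range p, (ζ - 1) ∣ ζ ^ i - 1 := fun i _ => by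
    simpa using sub_dvd_pow_sub_pow ζ 1 i
  have := Finset.dvd_sum h
  rw [Finset.sum_sub_distrib, hζ] at this
  simpa using this

theorem varpi_reg (hζ : ∑ i ∈ Finset.range p, ζ ^ i = 0) (ht : ∀ r : R, (p : R) * r = 0 → r = 0) (r : R) (h : (ζ - 1) * r = 0) : r = 0 := by
  obtain ⟨s, hs⟩ := varpi_dvd hζ
  apply ht
  rw [hs, mul_right_comm, h, zero_mul]

end zeta

/-- Solve `E(π) = ζ` approximately. -/
theorem exists_pi (E : Polynomial ℤ) (h0 : E.coeff 0 = 1) (h1 : (p : ℤ) ∣ E.coeff 1 - 1)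
    (ϖ : R) (hϖ : ϖ ∣ (p : R)) (K : ℕ) :
    ∃ π : R, ϖ ∣ π ∧ ϖ ^ K ∣ (E.map (Int.castRingHom R)).eval π - (1 + ϖ) := by
  suffices ∃ π : R, ϖ ∣ π ∧ ϖ ^ (K+1) ∣ (E.map (Int.castRingHom R)).eval π - (1 + ϖ) by
    obtain ⟨π, h, h'⟩ := this
    exact ⟨π, h, (pow_dvd_pow _ (by omega)).trans h'⟩
  set F := E.map (Int.castRingHom R) with hF
  have hF0 : F.coeff 0 = 1 := by simp [hF, h0]
  have hF1 : ϖ ∣ F.coeff 1 - 1 := by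
    refine hϖ.trans ?_
    obtain ⟨c, hc⟩ := h1
    have := congrArg (fun z : ℤ => (z : R)) hc
    push_cast at this
    exact ⟨c, by simpa [hF] using this⟩
  induction K with
  | zero =>
    refine ⟨0, dvd_zero _, ?_⟩
    rw [← Polynomial.coeff_zero_eq_eval_zero, hF0]
    simp
  | succ K ih =>
    obtain ⟨π, h, r, hr⟩ := ih
    refine ⟨π + - (ϖ ^ (K+1) * r), dvd_add h ((dvd_pow_self _ (by omega)).mul_right _).neg_right, ?_⟩
    obtain ⟨k, hk⟩ := F.binomExpansion π (- (ϖ ^ (K+1) * r))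
    obtain ⟨t, ht⟩ : ϖ ∣ F.derivative.eval π - 1 := by
      have : ϖ ∣ F.derivative.eval π - F.derivative.eval 0 := by
        refine dvd_trans ?_ (Polynomial.sub_dvd_eval_sub π 0 _)
        simpa using h
      have h2 : F.derivative.eval 0 = F.coeff 1 := by
        rw [← Polynomial.coeff_zero_eq_eval_zero, Polynomial.coeff_derivative]; simp
      rw [h2] at this
      simpa using dvd_add this hF1
    rw [hk]
    have e : F.eval π = ϖ ^ (K+1) * r + (1 + ϖ) := by rw [← hr]; ring
    have e2 : F.derivative.eval π = 1 + ϖ * t := by rw [← ht]; ring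
    rw [e, e2]
    exact ⟨ - t * r + k * ϖ ^ K * r ^ 2, by ring⟩

theorem rescale_poly {S : Type*} [CommRing S] (E : Polynomial S) (z : S) :
    PowerSeries.rescale z (E : PowerSeries S) = ((E.comp (Polynomial.C z * Polynomial.X) : Polynomial S) : PowerSeries S) := by
  ext n
  rw [PowerSeries.coeff_rescale, Polynomial.coeff_coe, Polynomial.coeff_coe,
    Polynomial.comp_C_mul_X_coeff, mul_comm]

theorem exists_theta (ι : Wi p →+* R) {ζ : R} (hζ : ∑ i ∈ Finset.range p, ζ ^ i = 0) (K : ℕ) :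
    ∃ θ : Polynomial R, (∀ n, (ζ - 1) ^ n ∣ θ.coeff n) ∧
    ∀ (f : ℕ) (x : Om p) (a : ℕ), x ^ p ^ f = x → (a : Om p) = ∑ j ∈ Finset.range f, x ^ p ^ j →
      (ζ - 1) ^ K ∣ ∏ j ∈ Finset.range f, θ.eval (ι (WittVector.teichmuller p x) ^ p ^ j) - ζ ^ a := by
  obtain ⟨M, E, hE0, hE1, hE⟩ := split_coeff (S := Wi p) p Fact.out (Wi_p_ne p) (K + 2)
  set ϖ := ζ - 1 with hϖ
  have hϖp : ϖ ∣ (p : R) := varpi_dvd hζ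
  obtain ⟨π, hπ, hπK⟩ := exists_pi E hE0 (hE1 (by omega)) ϖ hϖp K
  set F := E.map (Int.castRingHom R) with hF
  set EW := E.map (Int.castRingHom (Wi p)) with hEW
  have hEWs : PowerSeries.map (Int.castRingHom (Wi p)) (E : PowerSeries ℤ) = (EW : PowerSeries (Wi p)) := by
    ext n; simp [hEW]
  have hFE : EW.map ι = F := by
    rw [hEW, Polynomial.map_map, hF]
    congr 1
    exact RingHom.ext_int _ _
  refine ⟨F.comp (Polynomial.C π * Polynomial.X), ?_, ?_⟩
  · intro n
    rw [Polynomial.comp_C_mul_X_coeff]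
    exact (pow_dvd_pow_of_dvd hπ n).mul_left _
  · intro f x a hx ha
    set y := WittVector.teichmuller p x with hy
    have hyf : y ^ p ^ f = y := by rw [hy, ← map_pow, hx]
    obtain ⟨b, hb⟩ := teich_trace p f (M+1) x hx
    have hb1 := teich_trace' p f (M+1) (by omega) x b hb
    have hab : ζ ^ a = ζ ^ b := by
      have h1 : (a : Om p) = b := by rw [ha, hb1]
      have h2 : a ≡ b [MOD p] := (CharP.natCast_eq_natCast (Om p) p).1 h1
      rw [pow_eq_pow_mod a (zeta_pow hζ), pow_eq_pow_mod b (zeta_pow hζ), h2]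
    have key := hE y f b hyf ((pow_dvd_pow _ (by omega)).trans hb)
    rw [hEWs] at key
    simp_rw [rescale_poly] at key
    set P : Polynomial (Wi p) := ∏ j ∈ Finset.range f, EW.comp (Polynomial.C (y ^ p ^ j) * Polynomial.X) with hP
    have hPs : ∏ j ∈ Finset.range f, ((EW.comp (Polynomial.C (y ^ p ^ j) * Polynomial.X) : Polynomial (Wi p)) : PowerSeries (Wi p)) = (P : PowerSeries (Wi p)) := by
      rw [hP]
      simp only [← Polynomial.coeToPowerSeries.ringHom_apply, map_prod]
    rw [hPs, ← Polynomial.coe_pow] at key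
    simp_rw [Polynomial.coeff_coe] at key
    have h1 : ϖ ^ K ∣ ((P - EW ^ b).map ι).eval π := by
      rw [Polynomial.eval_eq_sum_range]
      refine Finset.dvd_sum fun n _ => ?_
      by_cases hn : n < K + 2
      · refine Dvd.dvd.mul_right ?_ _
        rw [Polynomial.coeff_map, Polynomial.coeff_sub]
        have h3 := map_dvd ι (key n hn)
        rw [map_pow, map_natCast] at h3
        refine dvd_trans ?_ h3
        exact (pow_dvd_pow _ (by omega)).trans (pow_dvd_pow_of_dvd hϖp _)
      · refine Dvd.dvd.mul_left ?_ _
        exact (pow_dvd_pow_of_dvd hπ K).trans (pow_dvd_pow _ (by omega))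
    have h2 : (P.map ι).eval π = ∏ j ∈ Finset.range f, (F.comp (Polynomial.C π * Polynomial.X)).eval (ι y ^ p ^ j) := by
      rw [hP, Polynomial.map_prod, Polynomial.eval_prod]
      refine Finset.prod_congr rfl fun j _ => ?_
      simp only [Polynomial.map_comp, hFE, Polynomial.eval_comp, Polynomial.map_mul, Polynomial.map_C, Polynomial.map_X,
        Polynomial.eval_mul, Polynomial.eval_C, Polynomial.eval_X]
      rw [map_pow, mul_comm]
    rw [Polynomial.map_sub, Polynomial.eval_sub, h2, Polynomial.map_pow, hFE, Polynomial.eval_pow] at h1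
    rw [hab]
    have h3 : ϖ ^ K ∣ F.eval π ^ b - ζ ^ b := by
      refine dvd_trans ?_ (sub_dvd_pow_sub_pow _ _ b)
      have : (1 + ϖ) = ζ := by rw [hϖ]; ring
      rwa [this] at hπK
    have := dvd_add h1 h3
    simpa using this

variable (p) in
/-- the finite subfield with `p ^ f` elements -/
noncomputable def Fq (f : ℕ) : Finset (Om p) := by
  classical
  exact (Polynomial.X ^ p ^ f - Polynomial.X : Polynomial (Om p)).roots.toFinset

theorem one_lt_pf {f : ℕ} (hf : 1 ≤ f) : 1 < p ^ f :=
  Nat.one_lt_pow (by omega) (Fact.out : p.Prime).one_lt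

theorem mem_Fq {f : ℕ} (hf : 1 ≤ f) (x : Om p) : x ∈ Fq p f ↔ x ^ p ^ f = x := by
  classical
  rw [Fq, Multiset.mem_toFinset, Polynomial.mem_roots
    (FiniteField.X_pow_card_sub_X_ne_zero (Om p) (one_lt_pf hf))]
  simp [sub_eq_zero]

open Classical in
theorem exists_gen {f : ℕ} (hf : 1 ≤ f) : ∃ g : Om p, IsPrimitiveRoot g (p ^ f - 1) ∧
    Fq p f = insert 0 ((Finset.range (p ^ f - 1)).image (fun i => g ^ i)) := by
  have h1 := one_lt_pf (p := p) hf
  set N := p ^ f - 1 with hN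
  have hN1 : p ^ f = N + 1 := by omega
  have hNe : NeZero (N : Om p) := by
    constructor
    have : (N : Om p) = -1 := by
      have : ((N + 1 : ℕ) : Om p) = 0 := by
        rw [← hN1, Nat.cast_pow, CharP.cast_eq_zero, zero_pow (by omega)]
      push_cast at this
      exact eq_neg_of_add_eq_zero_left this
    rw [this]; simp
  have hN0 : NeZero N := ⟨by omega⟩
  obtain ⟨g, hg⟩ := HasEnoughRootsOfUnity.exists_primitiveRoot (Om p) N
  refine ⟨g, hg, ?_⟩
  ext x
  rw [mem_Fq hf, hN1, pow_succ]
  simp only [Finset.mem_insert, Finset.mem_image, Finset.mem_range]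
  constructor
  · intro h
    by_cases hx : x = 0
    · exact Or.inl hx
    · right
      have h2 : x ^ N = 1 := mul_right_cancel₀ hx (by rw [h, one_mul])
      exact hg.eq_pow_of_pow_eq_one h2
  · rintro (h | ⟨i, hi, rfl⟩)
    · simp [h]
    · rw [← pow_mul, mul_comm i, pow_mul, hg.pow_eq_one, one_pow, one_mul]

theorem card_Fq {f : ℕ} (hf : 1 ≤ f) : (Fq p f).card = p ^ f := by
  classical
  obtain ⟨g, hg, h⟩ := exists_gen (p := p) hf
  have h1 := one_lt_pf (p := p) hf
  rw [h, Finset.card_insert_of_notMem, Finset.card_image_of_injOn, Finset.card_range]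
  · omega
  · intro i hi j hj hij
    exact hg.pow_inj (Finset.mem_range.1 hi) (Finset.mem_range.1 hj) hij
  · simp only [Finset.mem_image, not_exists, not_and]
    intro i _
    exact pow_ne_zero _ (hg.ne_zero (by omega))

theorem sum_teich {f : ℕ} (hf : 1 ≤ f) (E : ℕ) :
    ∑ x ∈ Fq p f, (WittVector.teichmuller p x) ^ E =
      (if E = 0 then 1 else 0) + (if (p ^ f - 1) ∣ E then ((p ^ f - 1 : ℕ) : Wi p) else 0) := by
  classical
  obtain ⟨g, hg, h⟩ := exists_gen (p := p) hf
  have h1 := one_lt_pf (p := p) hf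
  set N := p ^ f - 1 with hN
  rw [h, Finset.sum_insert, Finset.sum_image, WittVector.teichmuller_zero]
  · congr 1
    · split_ifs with hE
      · simp [hE]
      · rw [zero_pow hE]
    · set c := (WittVector.teichmuller p g) ^ E with hc
      have h2 : ∀ i, WittVector.teichmuller p (g ^ i) ^ E = c ^ i := by
        intro i
        rw [hc, map_pow, ← pow_mul, ← pow_mul, mul_comm]
      simp_rw [h2]
      split_ifs with hd
      · obtain ⟨k, rfl⟩ := hd
        have : c = 1 := by
          rw [hc, pow_mul, ← map_pow, hg.pow_eq_one, map_one, one_pow]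
        simp [this]
      · have hc1 : c - 1 ≠ 0 := by
          intro h3
          apply hd
          rw [← hg.pow_eq_one_iff_dvd]
          have h4 := congrArg (fun w : Wi p => w.coeff 0) (sub_eq_zero.1 h3)
          simp only [hc, ← map_pow, WittVector.teichmuller_coeff_zero] at h4
          simpa using h4
        have h5 := mul_geom_sum c N
        have h6 : c ^ N = 1 := by
          rw [← h2, hg.pow_eq_one, map_one, one_pow]
        rw [h6, sub_self] at h5
        exact (mul_eq_zero.1 h5).resolve_left hc1
  · intro i hi j hj hij
    exact hg.pow_inj (Finset.mem_range.1 hi) (Finset.mem_range.1 hj) hij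
  · simp only [Finset.mem_image, not_exists, not_and]
    intro i _
    exact pow_ne_zero _ (hg.ne_zero (by omega))

/-- everything the trace formula needs about the coefficient ring -/
structure Setup (p : ℕ) [Fact p.Prime] (R : Type) [CommRing R] (T : Om p →* R) (ζ : R) : Prop where
  zeta_sum : ∑ i ∈ Finset.range p, ζ ^ i = 0
  torsion : ∀ r : R, (p : R) * r = 0 → r = 0
  desc : ∀ (M : ℕ) (n : ℤ), (p : R) ^ M ∣ (n : R) → (p : ℤ) ^ M ∣ n
  sum_T : ∀ {f : ℕ}, 1 ≤ f → ∀ E : ℕ, ∑ x ∈ Fq p f, T x ^ E =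
      (if E = 0 then 1 else 0) + (if (p ^ f - 1) ∣ E then ((p ^ f - 1 : ℕ) : R) else 0)
  theta : ∀ K : ℕ, ∃ θ : Polynomial R, (∀ n, (ζ - 1) ^ n ∣ θ.coeff n) ∧
    ∀ (f : ℕ) (x : Om p) (a : ℕ), x ^ p ^ f = x → (a : Om p) = ∑ j ∈ Finset.range f, x ^ p ^ j →
      (ζ - 1) ^ K ∣ ∏ j ∈ Finset.range f, θ.eval (T x ^ p ^ j) - ζ ^ a

variable (p) in
theorem exists_setup : ∃ (R : Type) (_ : CommRing R) (T : Om p →* R) (ζ : R), Setup p R T ζ := by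
  obtain ⟨R, hR, ι, ζ, h1, h2, h3⟩ := exists_ring p
  refine ⟨R, hR, ι.toMonoidHom.comp (WittVector.teichmuller p), ζ, h1, h2, h3, ?_, ?_⟩
  · intro f hf E
    have := congrArg ι (sum_teich (p := p) hf E)
    rw [map_sum, map_add] at this
    simpa [apply_ite ι] using this
  · intro K
    exact exists_theta ι h1 K

end ring

end FVec


namespace FVec

section goodAt

variable {R : Type*} [CommRing R]

/-- `Good` at fixed levels -/
def GoodAt (ϖ : R) (B C K : ℕ) (a : ℕ → R) : Prop :=
  ∃ (ι : Type) (_ : Fintype ι) (_ : DecidableEq ι)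
    (S A : Matrix ι ι R) (T : Finset ι), T.card ≤ C ∧ (∀ i ∉ T, ∀ j, ϖ ^ B ∣ A i j) ∧
      ∀ m, 1 ≤ m → ϖ ^ K ∣ a m - (S * A ^ m).trace

variable {ϖ : R} {B K : ℕ}

theorem GoodAt.zero : GoodAt ϖ B 0 K (fun _ => 0) :=
  ⟨Empty, inferInstance, inferInstance, 0, 0, ∅, by simp, by simp, by simp [Matrix.trace]⟩

theorem GoodAt.add {a b : ℕ → R} {C₁ C₂ : ℕ} (ha : GoodAt ϖ B C₁ K a) (hb : GoodAt ϖ B C₂ K b) :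
    GoodAt ϖ B (C₁ + C₂) K (fun m => a m + b m) := by
  obtain ⟨ι₁, i1, i2, S₁, A₁, T₁, hc₁, hd₁, he₁⟩ := ha
  obtain ⟨ι₂, j1, j2, S₂, A₂, T₂, hc₂, hd₂, he₂⟩ := hb
  refine ⟨ι₁ ⊕ ι₂, inferInstance, inferInstance, Matrix.fromBlocks S₁ 0 0 S₂,
    Matrix.fromBlocks A₁ 0 0 A₂, T₁.disjSum T₂, ?_, ?_, ?_⟩
  · rw [Finset.card_disjSum]; omega
  · rintro (i | i) hi (j | j)
    · exact hd₁ i (by simpa using hi) j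
    · simp
    · simp
    · exact hd₂ i (by simpa using hi) j
  · intro m hm
    rw [fromBlocks_pow, Matrix.fromBlocks_multiply]
    simp only [Matrix.zero_mul, Matrix.mul_zero, add_zero, zero_add]
    have htr : (Matrix.fromBlocks (S₁ * A₁ ^ m) 0 0 (S₂ * A₂ ^ m)).trace
        = (S₁ * A₁ ^ m).trace + (S₂ * A₂ ^ m).trace := by
      simp [Matrix.trace]
    rw [htr, add_sub_add_comm]
    exact dvd_add (he₁ m hm) (he₂ m hm)

theorem GoodAt.sum {α : Type*} (s : Finset α) (a : α → ℕ → R) (C : ℕ) (h : ∀ i ∈ s, GoodAt ϖ B C K (a i)) :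
    GoodAt ϖ B (s.card * C) K (fun m => ∑ i ∈ s, a i m) := by
  classical
  induction s using Finset.induction_on with
  | empty => simpa using GoodAt.zero
  | insert x s hx ih =>
    simp only [Finset.sum_insert hx]
    rw [Finset.card_insert_of_notMem hx, add_mul, one_mul, add_comm]
    exact (h x (by simp)).add (ih fun i hi => h i (by simp [hi]))

theorem GoodAt.scale {a : ℕ → R} {C : ℕ} (ha : GoodAt ϖ B C K a) (c d : R) :
    GoodAt ϖ B C K (fun m => c * d ^ m * a m) := by
  obtain ⟨ι₁, i1, i2, S₁, A₁, T₁, hc₁, hd₁, he₁⟩ := ha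
  refine ⟨ι₁, i1, i2, c • S₁, d • A₁, T₁, hc₁, fun i hi j => ?_, fun m hm => ?_⟩
  · rw [Matrix.smul_apply]
    exact (hd₁ i hi j).mul_left _
  · rw [smul_pow, Matrix.smul_mul, Matrix.mul_smul, smul_smul, Matrix.trace_smul, smul_eq_mul,
      ← mul_sub]
    exact (he₁ m hm).mul_left _

theorem GoodAt.congr {a b : ℕ → R} {C : ℕ} (ha : GoodAt ϖ B C K a)
    (h : ∀ m, 1 ≤ m → ϖ ^ K ∣ b m - a m) : GoodAt ϖ B C K b := by
  obtain ⟨ι₁, i1, i2, S₁, A₁, T₁, hc₁, hd₁, he₁⟩ := ha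
  refine ⟨ι₁, i1, i2, S₁, A₁, T₁, hc₁, hd₁, fun m hm => ?_⟩
  have := dvd_add (h m hm) (he₁ m hm)
  simpa using this

end goodAt

section dwork

open MvPolynomial

variable {R : Type} [CommRing R] {V : Type} [Fintype V] [DecidableEq V]

/-- exponent vector attached to a point of the box -/
noncomputable def ex {M : ℕ} (u : V → Fin (M + 1)) : V →₀ ℕ :=
  Finsupp.equivFunOnFinite.symm (fun v => (u v).val)

theorem ex_apply {M : ℕ} (u : V → Fin (M + 1)) (v : V) : ex u v = (u v).val := rfl

theorem ex_inj {M : ℕ} {u w : V → Fin (M + 1)} (h : ex u = ex w) : u = w := by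
  funext v
  exact Fin.ext (DFunLike.congr_fun h v)

theorem ex_le {M : ℕ} (u : V → Fin (M + 1)) (v : V) : ex u v ≤ M := Nat.lt_succ_iff.1 (u v).2

theorem exists_ex {M : ℕ} (w : V →₀ ℕ) (h : ∀ v, w v ≤ M) : ∃ u : V → Fin (M + 1), ex u = w :=
  ⟨fun v => ⟨w v, Nat.lt_succ_iff.2 (h v)⟩, by ext v; rfl⟩

/-- The truncated Dwork matrix -/
noncomputable def Amat (M q : ℕ) (G : MvPolynomial V R) :
    Matrix (V → Fin (M + 1)) (V → Fin (M + 1)) R :=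
  Matrix.of fun u' u => coeff (q • ex u') (monomial (ex u) 1 * G)

/-- `∏_{l<m} G(X^{q^l})` -/
noncomputable def Hp (q : ℕ) (G : MvPolynomial V R) : ℕ → MvPolynomial V R
  | 0 => 1
  | m + 1 => G * expand q (Hp q G m)

theorem sum_box (M q : ℕ) (hq : 1 ≤ q) (F H : MvPolynomial V R) (n : V →₀ ℕ)
    (hF : ∀ w : V →₀ ℕ, (∃ v, M < w v) → coeff (q • w) F = 0) :
    ∑ w : V → Fin (M + 1), coeff n (monomial (ex w) 1 * H) * coeff (q • ex w) F
      = coeff (q • n) (F * expand q H) := by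
  induction H using MvPolynomial.induction_on' with
  | add P Q hP hQ => simp only [mul_add, coeff_add, add_mul, Finset.sum_add_distrib, hP, hQ, map_add]
  | monomial b r =>
    rw [expand_monomial, coeff_mul_monomial']
    simp only [monomial_mul, one_mul, coeff_monomial]
    by_cases hb : b ≤ n
    · rw [if_pos (by intro v; simpa using Nat.mul_le_mul_left q (hb v))]
      have e : q • n - q • b = q • (n - b) := by
        ext v; simp [Nat.mul_sub]
      rw [e]
      by_cases hw : ∀ v, (n - b) v ≤ M
      · obtain ⟨u, hu⟩ := exists_ex _ hw
        rw [Finset.sum_eq_single u]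
        · rw [hu, if_pos (by rw [tsub_add_cancel_of_le hb]), mul_comm]
        · intro w _ hwu
          rw [if_neg, zero_mul]
          intro h
          apply hwu
          apply ex_inj
          rw [hu, ← h, add_tsub_cancel_right]
        · simp
      · push Not at hw
        rw [hF _ hw, zero_mul]
        refine Finset.sum_eq_zero fun w _ => ?_
        rw [if_neg, zero_mul]
        intro h
        obtain ⟨v, hv⟩ := hw
        rw [← h, add_tsub_cancel_right] at hv
        exact absurd (ex_le w v) (by omega)
    · rw [if_neg]
      · refine Finset.sum_eq_zero fun w _ => ?_
        rw [if_neg, zero_mul]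
        intro h
        exact hb (h ▸ le_add_self)
      · intro h
        apply hb
        intro v
        have := h v
        simp only [Finsupp.smul_apply, smul_eq_mul] at this
        exact Nat.le_of_mul_le_mul_left this hq

/-- exponents of `G` are bounded by `M` coordinatewise -/
def Bd (M : ℕ) (G : MvPolynomial V R) : Prop := ∀ a, coeff a G ≠ 0 → ∀ v, a v ≤ M

theorem Amat_pow (M q : ℕ) (hq : 2 ≤ q) (G : MvPolynomial V R) (hG : Bd M G) (m : ℕ)
    (u' u : V → Fin (M + 1)) :
    ((Amat M q G) ^ m) u' u = coeff (q ^ m • ex u') (monomial (ex u) 1 * Hp q G m) := by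
  induction m generalizing u with
  | zero =>
    rw [pow_zero, pow_zero, one_smul, Hp, mul_one, coeff_monomial, Matrix.one_apply]
    by_cases h : u' = u
    · simp [h]
    · rw [if_neg h, if_neg]
      intro h'
      exact h (ex_inj h').symm
  | succ m ih =>
    rw [pow_succ, Matrix.mul_apply]
    simp only [ih]
    have := sum_box M q (by omega) (monomial (ex u) 1 * G) (Hp q G m) (q ^ m • ex u') (by
      rintro w ⟨v, hv⟩
      by_contra hne
      rw [coeff_monomial_mul', one_mul] at hne
      split_ifs at hne with hle
      swap
      · exact hne rfl
      have h1 := hG _ hne v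
      have h2 := ex_le u v
      simp only [Finsupp.tsub_apply, Finsupp.smul_apply, smul_eq_mul] at h1
      have h3 := Nat.mul_le_mul_right (w v) hq
      omega)
    rw [pow_succ', mul_smul, Hp, ← mul_assoc, ← this]
    rfl

theorem Hp_bd (M q : ℕ) (hq : 2 ≤ q) (G : MvPolynomial V R) (hG : Bd M G) (m : ℕ) (a : V →₀ ℕ)
    (ha : coeff a (Hp q G m) ≠ 0) (v : V) : a v + M ≤ M * q ^ m := by
  induction m generalizing a with
  | zero =>
    rw [Hp, coeff_one] at ha
    have : a = 0 := by
      by_contra h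
      exact ha (if_neg (fun h' => h h'.symm))
    simp [this]
  | succ m ih =>
    rw [Hp] at ha
    have h1 := MvPolynomial.support_mul _ _ (mem_support_iff.2 ha)
    obtain ⟨b, hb, c, hc, rfl⟩ := Finset.mem_add.1 h1
    rw [mem_support_iff] at hb hc
    have h3 := hG b hb v
    obtain ⟨c', rfl⟩ : ∃ c', c = q • c' := by
      have h5 := support_expand_subset _ (mem_support_iff.2 hc)
      obtain ⟨c', _, h6⟩ := Finset.mem_image.1 h5
      exact ⟨c', h6.symm⟩
    rw [coeff_expand_smul _ (by omega)] at hc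
    have h4 := ih c' hc
    simp only [Finsupp.add_apply, Finsupp.smul_apply, smul_eq_mul]
    rw [pow_succ]
    nlinarith

/-- decay of coefficients -/
def Dec (ϖ : R) (Δ : ℕ) (G : MvPolynomial V R) : Prop :=
  ∀ (a : V →₀ ℕ) (k : ℕ), Δ * k < a.degree + Δ → ϖ ^ k ∣ coeff a G

theorem Dec.one (ϖ : R) (Δ : ℕ) : Dec ϖ Δ (1 : MvPolynomial V R) := by
  intro a k h
  rw [coeff_one]
  split_ifs with h0
  · subst h0
    simp at h
    have : k = 0 := by
      by_contra hk
      have := Nat.le_mul_of_pos_right Δ (Nat.pos_of_ne_zero hk)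
      omega
    simp [this]
  · simp

theorem exists_ceil (Δ : ℕ) (hΔ : 1 ≤ Δ) (n : ℕ) : ∃ k, n ≤ Δ * k ∧ Δ * k < n + Δ := by
  refine ⟨(n + Δ - 1) / Δ, ?_, ?_⟩
  · have := Nat.lt_div_mul_add (a := n + Δ - 1) (b := Δ) (by omega)
    rw [mul_comm]; omega
  · have := Nat.mul_div_le (n + Δ - 1) Δ
    omega

theorem Dec.mul {ϖ : R} {Δ : ℕ} (hΔ : 1 ≤ Δ) {G H : MvPolynomial V R} (hG : Dec ϖ Δ G) (hH : Dec ϖ Δ H) :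
    Dec ϖ Δ (G * H) := by
  intro a k hk
  rw [coeff_mul]
  refine Finset.dvd_sum fun x hx => ?_
  have hx' := Finset.HasAntidiagonal.mem_antidiagonal.1 hx
  obtain ⟨k1, h1, h1'⟩ := exists_ceil Δ hΔ x.1.degree
  obtain ⟨k2, h2, h2'⟩ := exists_ceil Δ hΔ x.2.degree
  have h3 : k ≤ k1 + k2 := by
    rw [← hx', map_add] at hk
    have : Δ * k < Δ * (k1 + k2 + 1) := by nlinarith
    have := Nat.lt_of_mul_lt_mul_left this
    omega
  refine (pow_dvd_pow _ h3).trans ?_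
  rw [pow_add]
  exact mul_dvd_mul (hG _ _ h1') (hH _ _ h2')

theorem Dec.prod {ϖ : R} {Δ : ℕ} (hΔ : 1 ≤ Δ) {α : Type*} (s : Finset α) (G : α → MvPolynomial V R)
    (hG : ∀ i ∈ s, Dec ϖ Δ (G i)) : Dec ϖ Δ (∏ i ∈ s, G i) := by
  classical
  induction s using Finset.induction_on with
  | empty => simpa using Dec.one ϖ Δ
  | insert x s hx ih =>
    rw [Finset.prod_insert hx]
    exact (hG x (by simp)).mul hΔ (ih fun i hi => hG i (by simp [hi]))

theorem Dec.theta {ϖ : R} {Δ : ℕ} (θ : Polynomial R) (hθ : ∀ n, ϖ ^ n ∣ θ.coeff n)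
    (w : V →₀ ℕ) (c : R) (hw : w.degree ≤ Δ) :
    Dec ϖ Δ (Polynomial.aeval (monomial w c) θ) := by
  intro a k hk
  rw [Polynomial.aeval_eq_sum_range, coeff_sum]
  refine Finset.dvd_sum fun n _ => ?_
  rw [monomial_pow, coeff_smul, coeff_monomial]
  split_ifs with h
  · rw [smul_eq_mul]
    refine Dvd.dvd.mul_right ?_ _
    refine (pow_dvd_pow _ ?_).trans (hθ n)
    rw [← h, map_nsmul, smul_eq_mul] at hk
    have : Δ * k < Δ * (n + 1) := by nlinarith
    have := Nat.lt_of_mul_lt_mul_left this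
    omega
  · simp

theorem exists_conj {ϖ : R} {Δ : ℕ} (hΔ : 1 ≤ Δ) (M q : ℕ) (hq : 2 ≤ q) (G : MvPolynomial V R)
    (hG : Dec ϖ Δ G) :
    ∃ Bm : Matrix (V → Fin (M + 1)) (V → Fin (M + 1)) R,
      (∀ u' u, ϖ ^ ((ex u').degree / Δ) ∣ Bm u' u) ∧
      ∀ u' u, ϖ ^ ((ex u').degree / Δ) * Bm u' u = Amat M q G u' u * ϖ ^ ((ex u).degree / Δ) := by
  have key : ∀ u' u : V → Fin (M + 1), ∃ r, Amat M q G u' u * ϖ ^ ((ex u).degree / Δ) =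
      ϖ ^ ((ex u').degree / Δ) * (ϖ ^ ((ex u').degree / Δ) * r) := by
    intro u' u
    rw [Amat, Matrix.of_apply, coeff_monomial_mul', one_mul]
    split_ifs with h
    · obtain ⟨k, h1, h1'⟩ := exists_ceil Δ hΔ (q • ex u' - ex u).degree
      have h2 : (ex u).degree + (q • ex u' - ex u).degree = q * (ex u').degree := by
        rw [← map_add, add_tsub_cancel_of_le h, map_nsmul, smul_eq_mul]
      have h3 : 2 * ((ex u').degree / Δ) ≤ k + (ex u).degree / Δ := by
        have e1 := Nat.mul_div_le (ex u').degree Δ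
        have e2 := Nat.lt_mul_div_succ (ex u).degree (by omega : 0 < Δ)
        have : Δ * (2 * ((ex u').degree / Δ)) < Δ * (k + (ex u).degree / Δ + 1) := by nlinarith
        have := Nat.lt_of_mul_lt_mul_left this
        omega
      obtain ⟨s, hs⟩ := hG _ k h1'
      obtain ⟨t, ht⟩ := Nat.exists_eq_add_of_le h3
      refine ⟨ϖ ^ t * s, ?_⟩
      rw [hs, mul_right_comm, ← pow_add, ht]
      ring
    · exact ⟨0, by simp⟩
  choose r hr using key
  exact ⟨Matrix.of fun u' u => ϖ ^ ((ex u').degree / Δ) * r u' u, fun u' u => ⟨_, rfl⟩,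
    fun u' u => (hr u' u).symm⟩

theorem goodAt_trace {ϖ : R} (hreg : ∀ r : R, ϖ * r = 0 → r = 0) {Δ : ℕ} (hΔ : 1 ≤ Δ) (M q : ℕ) (hq : 2 ≤ q)
    (G : MvPolynomial V R) (hG : Dec ϖ Δ G) (B K : ℕ) (σ : V ≃ V) (Z : (V → Fin (M + 1)) → Prop) [DecidablePred Z] :
    GoodAt ϖ B ((Δ * B) ^ Fintype.card V) K
      (fun m => ∑ u : V → Fin (M + 1), if Z u then (Amat M q G ^ m) (u ∘ σ) u else 0) := by
  obtain ⟨Bm, hB1, hB2⟩ := exists_conj hΔ M q hq G hG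
  have hpow : ∀ m u' u, ϖ ^ ((ex u').degree / Δ) * (Bm ^ m) u' u = (Amat M q G ^ m) u' u * ϖ ^ ((ex u).degree / Δ) := by
    intro m
    induction m with
    | zero =>
      intro u' u
      rw [pow_zero, pow_zero, Matrix.one_apply]
      split_ifs with h
      · rw [h]; ring
      · simp
    | succ m ih =>
      intro u' u
      rw [pow_succ, pow_succ, Matrix.mul_apply, Matrix.mul_apply, Finset.mul_sum, Finset.sum_mul]
      refine Finset.sum_congr rfl fun w _ => ?_
      rw [← mul_assoc, ih, mul_assoc, hB2, mul_assoc]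
  have hregp : ∀ n (r s : R), ϖ ^ n * r = s * ϖ ^ n → r = s := by
    intro n
    induction n with
    | zero => intro r s h; simpa using h
    | succ n ih =>
      intro r s h
      apply ih
      rw [← sub_eq_zero]
      apply hreg
      rw [mul_sub, sub_eq_zero, ← mul_assoc, ← pow_succ', h]
      ring
  refine ⟨V → Fin (M + 1), inferInstance, inferInstance,
    Matrix.of fun u u' => if Z u ∧ u' = u ∘ σ then 1 else 0, Bm,
    Finset.univ.filter (fun u => (ex u).degree / Δ < B), ?_, ?_, ?_⟩
  · have : ((Δ * B) ^ Fintype.card V) = (Fintype.piFinset (fun _ : V => Finset.range (Δ * B))).card := by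
      simp
    rw [this]
    refine Finset.card_le_card_of_injOn (fun u v => (u v).val) ?_ ?_
    · intro u hu
      have hu' : (ex u).degree / Δ < B := by simpa using hu
      rw [Nat.div_lt_iff_lt_mul (by omega)] at hu'
      simp only [Finset.mem_coe, Fintype.mem_piFinset, Finset.mem_range]
      intro v
      have := Finsupp.le_degree v (ex u)
      rw [ex_apply] at this
      rw [mul_comm]; omega
    · intro u _ w _ h
      funext v
      exact Fin.ext (congrFun h v)
  · intro i hi j
    refine (pow_dvd_pow _ ?_).trans (hB1 i j)
    simpa using hi
  · intro m _
    have hdeg : ∀ u : V → Fin (M + 1), (ex (u ∘ σ)).degree = (ex u).degree := by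
      intro u
      rw [Finsupp.degree_eq_sum, Finsupp.degree_eq_sum]
      exact Equiv.sum_comp σ (fun v => (u v).val)
    have : (Matrix.trace (Matrix.of (fun u u' : V → Fin (M + 1) => if Z u ∧ u' = u ∘ σ then (1:R) else 0) * Bm ^ m)) =
        ∑ u : V → Fin (M + 1), if Z u then (Amat M q G ^ m) (u ∘ σ) u else 0 := by
      rw [Matrix.trace]
      refine Finset.sum_congr rfl fun u _ => ?_
      rw [Matrix.diag_apply, Matrix.mul_apply]
      have h1 := hpow m (u ∘ σ) u
      rw [hdeg] at h1
      have h2 := hregp _ _ _ h1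
      by_cases hZ : Z u
      · simp [hZ, h2]
      · simp [hZ]
    rw [this, sub_self]
    exact dvd_zero _

end dwork

end FVec


namespace FVec

section onevar

variable {d : ℕ} [NeZero d]

/-- digit sums -/
def EE (Q : ℕ) (w : ZMod d → ℕ) (j : ZMod d) : ℕ := ∑ i ∈ Finset.range d, w (j + (i : ZMod d)) * Q ^ i

theorem EE_rec (Q : ℕ) (w : ZMod d → ℕ) (j : ZMod d) :
    Q * EE Q w (j + 1) + w j = EE Q w j + Q ^ d * w j := by
  have h1 := Finset.sum_range_succ' (fun i : ℕ => w (j + (i : ZMod d)) * Q ^ i) d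
  have h2 := Finset.sum_range_succ (fun i : ℕ => w (j + (i : ZMod d)) * Q ^ i) d
  rw [h1] at h2
  have h3 : Q * EE Q w (j + 1) = ∑ i ∈ Finset.range d, w (j + ((i + 1 : ℕ) : ZMod d)) * Q ^ (i + 1) := by
    rw [EE, Finset.mul_sum]
    refine Finset.sum_congr rfl fun i _ => ?_
    have : j + 1 + (i : ZMod d) = j + ((i + 1 : ℕ) : ZMod d) := by push_cast; ring
    rw [this]; ring
  rw [h3, EE]
  simp only [Nat.cast_zero, add_zero, pow_zero, mul_one, CharP.cast_eq_zero] at h2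
  rw [h2, mul_comm (Q ^ d)]

theorem sol_pow (Q : ℕ) (w u : ZMod d → ℕ) (h : ∀ j, u j + w j = Q * u (j + 1)) (k : ℕ) (j : ZMod d) :
    Q ^ k * u (j + (k : ZMod d)) = u j + ∑ i ∈ Finset.range k, w (j + (i : ZMod d)) * Q ^ i := by
  induction k with
  | zero => simp
  | succ k ih =>
    rw [Finset.sum_range_succ, ← add_assoc, ← ih]
    have h1 := h (j + (k : ZMod d))
    have : j + ((k + 1 : ℕ) : ZMod d) = j + (k : ZMod d) + 1 := by push_cast; ring
    rw [this, pow_succ, mul_assoc, ← h1]; ring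

theorem sol_iff (Q : ℕ) (hQ : 2 ≤ Q) (w u : ZMod d → ℕ) :
    (∀ j, u j + w j = Q * u (j + 1)) ↔ ∀ j, (Q ^ d - 1) * u j = EE Q w j := by
  have h1 : 1 < Q ^ d := Nat.one_lt_pow (NeZero.ne d) (by omega)
  obtain ⟨N, hN⟩ : ∃ N, Q ^ d = N + 1 := ⟨Q ^ d - 1, by omega⟩
  constructor
  · intro h j
    have := sol_pow Q w u h d j
    rw [CharP.cast_eq_zero, add_zero, hN] at this
    rw [hN, Nat.add_sub_cancel, EE]
    linarith
  · intro h j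
    have h2 := EE_rec Q w j
    rw [← h, ← h, hN, Nat.add_sub_cancel] at h2
    have hN0 : 0 < N := by omega
    apply Nat.eq_of_mul_eq_mul_left hN0
    linarith

theorem EE_dvd (Q : ℕ) (hQ : 2 ≤ Q) (w : ZMod d → ℕ) (h : (Q ^ d - 1) ∣ EE Q w 0) (j : ZMod d) :
    (Q ^ d - 1) ∣ EE Q w j := by
  have h1 : 1 < Q ^ d := Nat.one_lt_pow (NeZero.ne d) (by omega)
  obtain ⟨N, hN⟩ : ∃ N, Q ^ d = N + 1 := ⟨Q ^ d - 1, by omega⟩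
  have key : ∀ k : ℕ, (Q ^ d - 1) ∣ EE Q w (k : ZMod d) := by
    intro k
    induction k with
    | zero => simpa using h
    | succ k ih =>
      have h2 := EE_rec Q w (k : ZMod d)
      rw [hN, Nat.add_sub_cancel] at ih ⊢
      rw [hN] at h2
      have h3 : Q * EE Q w ((k : ZMod d) + 1) = EE Q w k + N * w k := by linarith
      have h4 : N ∣ Q * EE Q w ((k : ZMod d) + 1) := h3 ▸ dvd_add ih (dvd_mul_right _ _)
      have hc : Nat.Coprime N Q := by
        have : Nat.Coprime N (Q ^ d) := by rw [hN]; simp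
        exact Nat.Coprime.coprime_dvd_right (dvd_pow_self _ (NeZero.ne d)) this
      push_cast
      exact hc.dvd_of_dvd_mul_left h4
  have := key j.val
  rwa [ZMod.natCast_zmod_val] at this

theorem EE_le (Q M : ℕ) (w : ZMod d → ℕ) (hw : ∀ j, w j + M ≤ M * Q) (j : ZMod d) :
    EE Q w j + M ≤ M * Q ^ d := by
  have : ∀ k : ℕ, ∑ i ∈ Finset.range k, w (j + (i : ZMod d)) * Q ^ i + M ≤ M * Q ^ k := by
    intro k
    induction k with
    | zero => simp
    | succ k ih =>
      rw [Finset.sum_range_succ, pow_succ]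
      have := Nat.mul_le_mul_right (Q ^ k) (hw (j + (k : ZMod d)))
      nlinarith
  exact this d

theorem EE_zero_eq (Q : ℕ) (w : ZMod d → ℕ) : EE Q w 0 = ∑ j : ZMod d, w j * Q ^ j.val := by
  rw [EE]
  symm
  refine Finset.sum_bij (fun j _ => j.val) ?_ ?_ ?_ ?_
  · intro j _; exact Finset.mem_range.2 (ZMod.val_lt j)
  · intro a _ b _ h; exact ZMod.val_injective d h
  · intro i hi; exact ⟨(i : ZMod d), Finset.mem_univ _, ZMod.val_cast_of_lt (Finset.mem_range.1 hi)⟩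
  · intro j _; simp

theorem EE_eq_zero_iff (Q : ℕ) (hQ : 1 ≤ Q) (w : ZMod d → ℕ) : EE Q w 0 = 0 ↔ ∀ j, w j = 0 := by
  rw [EE_zero_eq, Finset.sum_eq_zero_iff]
  have : Q ≠ 0 := by omega
  simp [this]

end onevar

section multi

open MvPolynomial

variable {V : Type} [Fintype V] [DecidableEq V] (d : V → ℕ) [∀ v, NeZero (d v)]

abbrev VV : Type := Σ v, ZMod (d v)

/-- cyclic shift -/
def shf : VV d ≃ VV d := Equiv.sigmaCongrRight fun v => Equiv.addRight (1 : ZMod (d v))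

theorem shf_apply (v : V) (j : ZMod (d v)) : shf d ⟨v, j⟩ = ⟨v, j + 1⟩ := rfl

variable {d}

/-- the condition on exponents -/
def PC (Q : ℕ) (Z : V → Prop) (w : VV d →₀ ℕ) : Prop :=
  ∀ v, (Z v → ∀ j, w ⟨v, j⟩ = 0) ∧ (¬ Z v → (Q ^ d v - 1) ∣ EE Q (fun j => w ⟨v, j⟩) 0)

theorem count (M Q : ℕ) (hQ : 2 ≤ Q) (Z : V → Prop) (w : VV d →₀ ℕ) (hw : ∀ x, w x + M ≤ M * Q) :
    PC Q Z w → ∃ u : VV d → Fin (M + 1), (∀ v, Z v → ∀ j, u ⟨v, j⟩ = 0) ∧ ex u + w = Q • ex (u ∘ shf d) := by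
  classical
  intro h
  have hle : ∀ x : VV d, (if Z x.1 then 0 else EE Q (fun j => w ⟨x.1, j⟩) x.2 / (Q ^ d x.1 - 1)) ≤ M := by
    rintro ⟨v, j⟩
    dsimp only
    split_ifs
    · omega
    · apply Nat.div_le_of_le_mul
      have h1 := EE_le Q M (fun j => w ⟨v, j⟩) (fun j => hw _) j
      rw [Nat.sub_mul, one_mul, mul_comm]
      omega
  refine ⟨fun x => ⟨_, Nat.lt_succ_iff.2 (hle x)⟩, ?_, ?_⟩
  · intro v hv j
    ext
    simp [hv]
  · ext ⟨v, j⟩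
    simp only [Finsupp.add_apply, Finsupp.smul_apply, ex_apply, Function.comp, shf_apply, smul_eq_mul]
    by_cases hv : Z v
    · simp [hv, (h v).1 hv j]
    · simp only [hv, if_false]
      refine (sol_iff Q hQ (fun j => w ⟨v, j⟩) (fun j => EE Q (fun j => w ⟨v, j⟩) j / (Q ^ d v - 1))).2 ?_ j
      intro j
      exact Nat.mul_div_cancel' (EE_dvd Q hQ _ ((h v).2 hv) j)

theorem count_conv (M Q : ℕ) (hQ : 2 ≤ Q) (Z : V → Prop) (w : VV d →₀ ℕ) 
    (u : VV d → Fin (M + 1)) (h1 : ∀ v, Z v → ∀ j, u ⟨v, j⟩ = 0) (h2 : ex u + w = Q • ex (u ∘ shf d)) :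
    PC Q Z w := by
  intro v
  have h3 : ∀ j, (u ⟨v, j⟩).val + w ⟨v, j⟩ = Q * (u ⟨v, j+1⟩).val := by
    intro j
    exact DFunLike.congr_fun h2 (⟨v, j⟩ : VV d)
  constructor
  · intro hv j
    have := h3 j
    rw [h1 v hv, h1 v hv] at this
    simpa using this
  · intro _
    exact ⟨_, ((sol_iff Q hQ (fun j => w ⟨v, j⟩) (fun j => (u ⟨v, j⟩).val)).1 h3 0).symm⟩

theorem count_uniq (M Q : ℕ) (hQ : 2 ≤ Q) (w : VV d →₀ ℕ) 
    (u u' : VV d → Fin (M + 1)) (h : ex u + w = Q • ex (u ∘ shf d))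
    (h' : ex u' + w = Q • ex (u' ∘ shf d)) : u = u' := by
  funext ⟨v, j⟩
  have h3 : ∀ j, (u ⟨v, j⟩).val + w ⟨v, j⟩ = Q * (u ⟨v, j+1⟩).val := by
    intro j
    exact DFunLike.congr_fun h (⟨v, j⟩ : VV d)
  have h4 : ∀ j, (u' ⟨v, j⟩).val + w ⟨v, j⟩ = Q * (u' ⟨v, j+1⟩).val := by
    intro j
    exact DFunLike.congr_fun h' (⟨v, j⟩ : VV d)
  have e1 := (sol_iff Q hQ (fun j => w ⟨v, j⟩) (fun j => (u ⟨v, j⟩).val)).1 h3 j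
  have e2 := (sol_iff Q hQ (fun j => w ⟨v, j⟩) (fun j => (u' ⟨v, j⟩).val)).1 h4 j
  have hN : 0 < Q ^ d v - 1 := by
    have : 1 < Q ^ d v := Nat.one_lt_pow (NeZero.ne _) (by omega)
    omega
  exact Fin.ext (Nat.eq_of_mul_eq_mul_left hN (e1.trans e2.symm))

/-- vanishing of some coordinates -/
def ZB {M : ℕ} (Z : V → Prop) (u : VV d → Fin (M + 1)) : Prop := ∀ v, Z v → ∀ j, u ⟨v, j⟩ = 0

open Classical in
theorem count_sum {R : Type} [CommRing R] (M Q : ℕ) (hQ : 2 ≤ Q) (Z : V → Prop) (H : MvPolynomial (VV d) R)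
    (hH : ∀ w, coeff w H ≠ 0 → ∀ x, w x + M ≤ M * Q) :
    ∑ u : VV d → Fin (M + 1), (if ZB Z u then
      coeff (Q • ex (u ∘ shf d)) (monomial (ex u) 1 * H) else 0) =
    ∑ w ∈ H.support, coeff w H * (if PC Q Z w then 1 else 0) := by
  have h1 : ∀ u : VV d → Fin (M + 1), coeff (Q • ex (u ∘ shf d)) (monomial (ex u) 1 * H) =
      ∑ w ∈ H.support, coeff w H * (if ex u + w = Q • ex (u ∘ shf d) then 1 else 0) := by
    intro u
    conv_lhs => rw [H.as_sum]
    rw [Finset.mul_sum, coeff_sum]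
    refine Finset.sum_congr rfl fun w _ => ?_
    rw [monomial_mul, one_mul, coeff_monomial]
    simp
  have h2 : ∀ u : VV d → Fin (M + 1), (if ZB Z u then
      coeff (Q • ex (u ∘ shf d)) (monomial (ex u) 1 * H) else 0) =
      ∑ w ∈ H.support, coeff w H * (if ZB Z u ∧ ex u + w = Q • ex (u ∘ shf d) then 1 else 0) := by
    intro u
    rw [h1]
    by_cases hz : ZB Z u
    · rw [if_pos hz]
      refine Finset.sum_congr rfl fun w _ => ?_
      congr 1
      by_cases he : ex u + w = Q • ex (u ∘ shf d)
      · rw [if_pos he, if_pos ⟨hz, he⟩]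
      · rw [if_neg he, if_neg (fun h => he h.2)]
    · rw [if_neg hz]
      symm
      refine Finset.sum_eq_zero fun w _ => ?_
      rw [if_neg (fun h => hz h.1), mul_zero]
  rw [Finset.sum_congr rfl fun u _ => h2 u, Finset.sum_comm]
  refine Finset.sum_congr rfl fun w hw => ?_
  rw [← Finset.mul_sum]
  congr 1
  split_ifs with hP
  · obtain ⟨u, hu1, hu2⟩ := count M Q hQ Z w (hH w (mem_support_iff.1 hw)) hP
    rw [Finset.sum_eq_single u, if_pos ⟨hu1, hu2⟩]
    · intro u' _ hne
      rw [if_neg]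
      rintro ⟨_, h⟩
      exact hne (count_uniq M Q hQ w u' u h hu2)
    · simp
  · refine Finset.sum_eq_zero fun u _ => ?_
    rw [if_neg]
    rintro ⟨h3, h4⟩
    exact hP (count_conv M Q hQ Z w u h3 h4)

variable {p : ℕ} [Fact p.Prime] {R : Type} [CommRing R] {T : Om p →* R} {ζ : R}

/-- the point of the big torus attached to `x` -/
noncomputable def XX (T : Om p →* R) (Q : ℕ) (x : V → Om p) : VV d → R := fun y => T (x y.1) ^ Q ^ y.2.val

/-- sign factors -/
def kap (c : Fin 3) : ℤ := if c = 1 then -1 else 1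

/-- scaling factors -/
def del (q d : ℕ) (c : Fin 3) : ℕ := if c = 2 then q ^ d else 1

open Classical in
theorem sum_eval (hS : Setup p R T ζ) (f M Q : ℕ) (hf : 1 ≤ f) (hQf : Q = p ^ f)
    (H : MvPolynomial (VV d) R) (hH : ∀ w, coeff w H ≠ 0 → ∀ x, w x + M ≤ M * Q) :
    ∑ x ∈ Fintype.piFinset (fun v => Fq p (f * d v)), eval (XX (d := d) T Q x) H =
    ∑ c : V → Fin 3, ((∏ v, kap (c v) : ℤ) : R) * ((∏ v, del Q (d v) (c v) : ℕ) : R) *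
      ∑ u : VV d → Fin (M + 1), (if ZB (fun v => c v = 0) u then
      coeff (Q • ex (u ∘ shf d)) (monomial (ex u) 1 * H) else 0) := by
  have hQ : 2 ≤ Q := by
    rw [hQf]; exact one_lt_pf hf
  have h1 : ∀ w : VV d →₀ ℕ, ∑ x ∈ Fintype.piFinset (fun v => Fq p (f * d v)), ∏ y, XX (d := d) T Q x y ^ w y
      = ∑ c : V → Fin 3, ((∏ v, kap (c v) : ℤ) : R) * ((∏ v, del Q (d v) (c v) : ℕ) : R) *
        (if PC Q (fun v => c v = 0) w then 1 else 0) := by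
    intro w
    have e1 : ∀ x : V → Om p, ∏ y, XX (d := d) T Q x y ^ w y = ∏ v, T (x v) ^ (EE Q (fun j => w ⟨v, j⟩) 0) := by
      intro x
      rw [Fintype.prod_sigma]
      refine Finset.prod_congr rfl fun v _ => ?_
      rw [EE_zero_eq, ← Finset.prod_pow_eq_pow_sum]
      refine Finset.prod_congr rfl fun j _ => ?_
      rw [XX, ← pow_mul, mul_comm]
    simp_rw [e1]
    rw [← Finset.prod_univ_sum (fun v => Fq p (f * d v)) (fun v z => T z ^ (EE Q (fun j => w ⟨v, j⟩) 0))]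
    have e2 : ∀ v, ∑ z ∈ Fq p (f * d v), T z ^ (EE Q (fun j => w ⟨v, j⟩) 0) =
        ∑ c : Fin 3, (kap c : R) * (del Q (d v) c : R) *
          (if ((c = 0 → ∀ j, w ⟨v, j⟩ = 0) ∧ (¬ c = 0 → (Q ^ d v - 1) ∣ EE Q (fun j => w ⟨v, j⟩) 0)) then 1 else 0) := by
      intro v
      have hfd : 1 ≤ f * d v := Nat.mul_pos hf (NeZero.pos (d v))
      rw [hS.sum_T hfd, pow_mul, ← hQf, Fin.sum_univ_three]
      have hge : 1 ≤ Q ^ d v := Nat.one_le_pow _ _ (by omega)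
      simp only [EE_eq_zero_iff Q (by omega : 1 ≤ Q)]
      simp [kap, del, Nat.cast_sub hge]
      split_ifs <;> ring
    rw [Finset.prod_congr rfl fun v _ => e2 v, Finset.prod_univ_sum, Fintype.piFinset_univ]
    refine Finset.sum_congr rfl fun c _ => ?_
    rw [Finset.prod_mul_distrib, Finset.prod_mul_distrib, Finset.prod_boole]
    push_cast
    congr 1
    by_cases hP : PC Q (fun v => c v = 0) w
    · rw [if_pos hP, if_pos (fun v _ => hP v)]
    · rw [if_neg hP, if_neg (fun h => hP fun v => h v (Finset.mem_univ v))]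
  have h2 : ∀ x, eval (XX (d := d) T Q x) H = ∑ w ∈ H.support, coeff w H * ∏ y, XX (d := d) T Q x y ^ w y := by
    intro x
    rw [eval_eq']
  simp_rw [h2]
  rw [Finset.sum_comm]
  simp_rw [← Finset.mul_sum, h1]
  simp_rw [Finset.mul_sum]
  rw [Finset.sum_comm]
  refine Finset.sum_congr rfl fun c _ => ?_
  rw [← Finset.mul_sum, count_sum M Q hQ (fun v => c v = 0) H hH, Finset.mul_sum]
  refine Finset.sum_congr rfl fun w _ => ?_
  ring

end multi

end FVec


namespace FVec

section expsum

open MvPolynomial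

variable {V : Type} [Fintype V] [DecidableEq V] {d : V → ℕ} [∀ v, NeZero (d v)]
variable {p : ℕ} [Fact p.Prime] {R : Type} [CommRing R] {T : Om p →* R} {ζ : R}

open Classical in
/-- the additive character -/
noncomputable def psi (ζ : R) (t : Om p) : R :=
  if h : ∃ a : ℕ, (a : Om p) = t then ζ ^ h.choose else 0

theorem zeta_congr (hζ : ∑ i ∈ Finset.range p, ζ ^ i = 0) {a b : ℕ} (h : (a : Om p) = b) : ζ ^ a = ζ ^ b := by
  have h2 : a ≡ b [MOD p] := (CharP.natCast_eq_natCast (Om p) p).1 h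
  rw [pow_eq_pow_mod a (zeta_pow hζ), pow_eq_pow_mod b (zeta_pow hζ), h2]

theorem psi_nat (hζ : ∑ i ∈ Finset.range p, ζ ^ i = 0) (a : ℕ) : psi ζ (a : Om p) = ζ ^ a := by
  have h : ∃ b : ℕ, (b : Om p) = a := ⟨a, rfl⟩
  rw [psi, dif_pos h]
  exact zeta_congr hζ h.choose_spec

/-- trace -/
noncomputable def Tr (N : ℕ) (z : Om p) : Om p := ∑ j ∈ Finset.range N, z ^ p ^ j

theorem Tr_nat (N : ℕ) (z : Om p) (hz : z ^ p ^ N = z) : ∃ a : ℕ, (a : Om p) = Tr N z := by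
  obtain ⟨a, ha⟩ := teich_trace p N 1 z hz
  exact ⟨a, teich_trace' p N 1 le_rfl z a ha⟩

theorem Tr_sum {α : Type*} (N : ℕ) (s : Finset α) (z : α → Om p) : Tr N (∑ i ∈ s, z i) = ∑ i ∈ s, Tr N (z i) := by
  unfold Tr
  rw [Finset.sum_comm]
  refine Finset.sum_congr rfl fun j _ => ?_
  rw [sum_pow_char_pow]

theorem pow_iter {S : Type*} [Monoid S] (x : S) (n k : ℕ) (h : x ^ n = x) : x ^ n ^ k = x := by
  induction k with
  | zero => simp
  | succ k ih => rw [pow_succ, pow_mul, ih, h]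

theorem prod_sub_dvd {α : Type*} (s : Finset α) (a b : α → R) (x : R) (h : ∀ i ∈ s, x ∣ a i - b i) :
    x ∣ ∏ i ∈ s, a i - ∏ i ∈ s, b i := by
  classical
  induction s using Finset.induction_on with
  | empty => simp
  | insert i s hi ih =>
    rw [Finset.prod_insert hi, Finset.prod_insert hi]
    have : a i * ∏ j ∈ s, a j - b i * ∏ j ∈ s, b j =
      (a i - b i) * ∏ j ∈ s, a j + b i * (∏ j ∈ s, a j - ∏ j ∈ s, b j) := by ring
    rw [this]
    exact dvd_add ((h i (by simp)).mul_right _) ((ih fun j hj => h j (by simp [hj])).mul_left _)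

theorem prod_range_mul' (a b : ℕ) (g : ℕ → R) :
    ∏ j ∈ Finset.range (b * a), g j = ∏ l ∈ Finset.range a, ∏ k ∈ Finset.range b, g (b * l + k) := by
  induction a with
  | zero => simp
  | succ a ih => rw [mul_add, mul_one, Finset.prod_range_add, ih, Finset.prod_range_succ]

variable (d) in
/-- exponent of the monomial `x^u` placed in layer `l` -/
noncomputable def mu (l : ℕ) (u : V →₀ ℕ) : VV d →₀ ℕ :=
  Finsupp.equivFunOnFinite.symm fun y => if y.2 = (l : ZMod (d y.1)) then u y.1 else 0

theorem mu_apply (l : ℕ) (u : V →₀ ℕ) (y : VV d) :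
    mu d l u y = if y.2 = (l : ZMod (d y.1)) then u y.1 else 0 := rfl

theorem mu_degree (l : ℕ) (u : V →₀ ℕ) : (mu d l u).degree = u.degree := by
  rw [Finsupp.degree_eq_sum, Finsupp.degree_eq_sum, Fintype.sum_sigma]
  refine Finset.sum_congr rfl fun v _ => ?_
  rw [Finset.sum_eq_single (l : ZMod (d v))]
  · rw [mu_apply, if_pos rfl]
  · intro j _ hj
    rw [mu_apply, if_neg hj]
  · simp

theorem eval_mon (l k : ℕ) (u : V →₀ ℕ) (c : R) (Y : VV d → R) :
    eval Y (monomial (p ^ k • mu d l u) (c ^ p ^ k)) = (c * ∏ v, Y ⟨v, l⟩ ^ u v) ^ p ^ k := by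
  rw [eval_monomial, Finsupp.prod_fintype _ _ (by simp), mul_pow, ← Finset.prod_pow, Fintype.prod_sigma]
  congr 1
  refine Finset.prod_congr rfl fun v _ => ?_
  rw [Finset.prod_eq_single (l : ZMod (d v))]
  · rw [Finsupp.smul_apply, mu_apply, if_pos rfl, smul_eq_mul, mul_comm, pow_mul]
  · intro j _ hj
    rw [Finsupp.smul_apply, mu_apply, if_neg hj]
    simp
  · simp

variable (d) in
/-- the Dwork splitting polynomial -/
noncomputable def GG (T : Om p →* R) (e D : ℕ) (f : MvPolynomial V (Om p)) (θ : Polynomial R) : MvPolynomial (VV d) R :=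
  ∏ l ∈ Finset.range D, ∏ u ∈ f.support, ∏ k ∈ Finset.range e,
    Polynomial.aeval (monomial (p ^ k • mu d l u) (T (coeff u f) ^ p ^ k)) θ

theorem eval_aeval (Y : VV d → R) (P : MvPolynomial (VV d) R) (θ : Polynomial R) :
    eval Y (Polynomial.aeval P θ) = θ.eval (eval Y P) := by
  have := Polynomial.aeval_algHom_apply (MvPolynomial.aeval Y : MvPolynomial (VV d) R →ₐ[R] R) P θ
  rw [MvPolynomial.aeval_eq_eval] at this
  simpa [Polynomial.aeval_def, Polynomial.eval₂_eq_eval_map] using this.symm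

theorem eval_expand' (q : ℕ) (Y : VV d → R) (P : MvPolynomial (VV d) R) :
    eval Y (expand q P) = eval (fun y => Y y ^ q) P := by
  induction P using MvPolynomial.induction_on with
  | C a => simp
  | add P Q hP hQ => simp [hP, hQ]
  | mul_X P n h => simp [h]

theorem eval_Hp (q : ℕ) (G : MvPolynomial (VV d) R) (m : ℕ) (Y : VV d → R) :
    eval Y (Hp q G m) = ∏ i ∈ Finset.range m, eval (fun y => Y y ^ q ^ i) G := by
  induction m generalizing Y with
  | zero => simp [Hp]
  | succ m ih =>
    rw [Hp, map_mul, eval_expand', ih, Finset.prod_range_succ', mul_comm]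
    simp only [pow_zero, pow_one]
    congr 1
    refine Finset.prod_congr rfl fun i _ => ?_
    congr 2
    funext y
    rw [← pow_mul, ← pow_succ']

theorem GG_dec {ϖ : R} (e D : ℕ) (f : MvPolynomial V (Om p)) (θ : Polynomial R) (hθ : ∀ n, ϖ ^ n ∣ θ.coeff n) :
    Dec ϖ (p ^ e * f.totalDegree + 1) (GG d T e D f θ) := by
  refine Dec.prod (by omega) _ _ fun l _ => Dec.prod (by omega) _ _ fun u hu => Dec.prod (by omega) _ _ fun k hk => ?_
  apply Dec.theta θ hθ
  rw [map_nsmul, mu_degree, smul_eq_mul]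
  have h1 : u.degree ≤ f.totalDegree := by
    have := MvPolynomial.le_totalDegree hu
    exact this
  have h2 : p ^ k ≤ p ^ e := Nat.pow_le_pow_right (Fact.out : p.Prime).pos (Finset.mem_range.1 hk).le
  exact (Nat.mul_le_mul h2 h1).trans (by omega)

theorem eval_Hp_GG (e D m : ℕ) (f : MvPolynomial V (Om p))
    (hf : ∀ u, coeff u f ^ p ^ e = coeff u f) (θ : Polynomial R) (x : V → Om p)
    (hx : ∀ v, x v ^ p ^ (e * m * d v) = x v) :
    eval (XX (d := d) T ((p ^ e) ^ m) x) (Hp (p ^ e) (GG d T e D f θ) m) =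
      ∏ u ∈ f.support, ∏ j ∈ Finset.range (e * m * D), θ.eval (T (coeff u f * ∏ v, x v ^ u v) ^ p ^ j) := by
  rw [eval_Hp]
  have key : ∀ i l k u, eval (fun y => XX (d := d) T ((p ^ e) ^ m) x y ^ (p ^ e) ^ i)
      (monomial (p ^ k • mu d l u) (T (coeff u f) ^ p ^ k)) =
      T (coeff u f * ∏ v, x v ^ u v) ^ p ^ (e * m * l + (e * i + k)) := by
    intro i l k u
    rw [eval_mon]
    have e1 : p ^ (e * m * l + (e * i + k)) = ((p ^ e) ^ m) ^ l * (p ^ e) ^ i * p ^ k := by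
      rw [← pow_mul, ← pow_mul, ← pow_mul, ← pow_add, ← pow_add, add_assoc, mul_assoc]
    rw [e1, pow_mul]
    congr 1
    rw [map_mul, mul_pow]
    congr 1
    · rw [← map_pow, pow_mul, ← pow_mul (p ^ e), pow_iter _ _ _ (hf u), pow_iter _ _ _ (hf u)]
    · rw [map_prod, ← Finset.prod_pow]
      refine Finset.prod_congr rfl fun v _ => ?_
      have e2 : T (x v) ^ ((p ^ e) ^ m) ^ (l : ZMod (d v)).val = T (x v) ^ ((p ^ e) ^ m) ^ l := by
        rw [← map_pow, ← map_pow]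
        congr 1
        rw [ZMod.val_natCast]
        conv_rhs => rw [← Nat.div_add_mod l (d v), pow_add, pow_mul ((p ^ e) ^ m), pow_mul]
        rw [pow_iter _ (((p ^ e) ^ m) ^ d v)]
        rw [← pow_mul, ← pow_mul, ← mul_assoc, hx]
      rw [XX, e2, map_pow]
      simp only [← pow_mul]
      congr 1
      ring
  simp only [GG, map_prod, eval_aeval, key]
  have hc : ∀ i, (∏ l ∈ Finset.range D, ∏ u ∈ f.support, ∏ k ∈ Finset.range e,
      Polynomial.eval (T (coeff u f * ∏ v, x v ^ u v) ^ p ^ (e * m * l + (e * i + k))) θ) =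
      ∏ u ∈ f.support, ∏ l ∈ Finset.range D, ∏ k ∈ Finset.range e,
      Polynomial.eval (T (coeff u f * ∏ v, x v ^ u v) ^ p ^ (e * m * l + (e * i + k))) θ :=
    fun i => Finset.prod_comm
  simp only [hc]
  rw [Finset.prod_comm]
  refine Finset.prod_congr rfl fun u _ => ?_
  rw [Finset.prod_comm, prod_range_mul' D (e * m)]
  refine Finset.prod_congr rfl fun l _ => ?_
  rw [prod_range_mul' m e]

theorem psi_trace {K : ℕ} (hS : Setup p R T ζ) (e D m : ℕ) (f : MvPolynomial V (Om p)) (hD : ∀ v, d v ∣ D)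
    (hf : ∀ u, coeff u f ^ p ^ e = coeff u f) (θ : Polynomial R)
    (hθ : ∀ (f : ℕ) (x : Om p) (a : ℕ), x ^ p ^ f = x → (a : Om p) = ∑ j ∈ Finset.range f, x ^ p ^ j →
      (ζ - 1) ^ K ∣ ∏ j ∈ Finset.range f, θ.eval (T x ^ p ^ j) - ζ ^ a)
    (x : V → Om p)
    (hx : ∀ v, x v ^ p ^ (e * m * d v) = x v) :
    (ζ - 1) ^ K ∣ psi ζ (Tr (e * m * D) (eval x f)) -
      eval (XX (d := d) T ((p ^ e) ^ m) x) (Hp (p ^ e) (GG d T e D f θ) m) := by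
  rw [eval_Hp_GG e D m f hf θ x hx]
  have hxD : ∀ v, x v ^ p ^ (e * m * D) = x v := by
    intro v
    obtain ⟨k, hk⟩ := hD v
    rw [hk, ← mul_assoc, pow_mul]
    exact pow_iter _ _ _ (hx v)
  have hz : ∀ u, (coeff u f * ∏ v, x v ^ u v) ^ p ^ (e * m * D) = coeff u f * ∏ v, x v ^ u v := by
    intro u
    rw [mul_pow, ← Finset.prod_pow]
    have h0 : coeff u f ^ p ^ (e * m * D) = coeff u f := by
      rw [mul_assoc, pow_mul]
      exact pow_iter _ _ _ (hf u)
    rw [h0]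
    congr 1
    refine Finset.prod_congr rfl fun v _ => ?_
    rw [← pow_mul, mul_comm, pow_mul, hxD]
  choose a ha using fun u => Tr_nat _ _ (hz u)
  have h1 : psi ζ (Tr (e * m * D) (eval x f)) = ∏ u ∈ f.support, ζ ^ a u := by
    rw [eval_eq', Tr_sum]
    simp only [← ha]
    rw [← Nat.cast_sum, psi_nat hS.zeta_sum, Finset.prod_pow_eq_pow_sum]
  rw [h1, dvd_sub_comm]
  exact prod_sub_dvd _ _ _ _ fun u _ => hθ _ _ _ (hz u) (ha u)

/-- exponential sums -/
noncomputable def expsum (d : V → ℕ) (ζ : R) (e D : ℕ) (f : MvPolynomial V (Om p)) (m : ℕ) : R :=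
  ∑ x ∈ Fintype.piFinset (fun v => Fq p (e * m * d v)), psi ζ (Tr (e * m * D) (eval x f))

theorem expsum_good (hS : Setup p R T ζ) (e D : ℕ) (he : 1 ≤ e) (f : MvPolynomial V (Om p)) (hD : ∀ v, d v ∣ D)
    (hf : ∀ u, coeff u f ^ p ^ e = coeff u f) : Good (ζ - 1) (expsum d ζ e D f) := by
  classical
  intro B
  refine ⟨(Finset.univ : Finset (V → Fin 3)).card * (((p ^ e * f.totalDegree + 1) * B) ^ Fintype.card (VV d)), fun K => ?_⟩
  obtain ⟨θ, hθ1, hθ2⟩ := hS.theta K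
  change GoodAt _ _ _ _ _
  set G := GG d T e D f θ with hG
  have hBd : Bd G.totalDegree G := by
    intro a ha v
    have h1 := MvPolynomial.le_totalDegree (MvPolynomial.mem_support_iff.2 ha)
    have h2 : a v ≤ a.degree := Finsupp.le_degree v a
    exact h2.trans h1
  have hq : 2 ≤ p ^ e := one_lt_pf he
  have hreg : ∀ r : R, (ζ - 1) * r = 0 → r = 0 := fun r h => varpi_reg hS.zeta_sum hS.torsion r h
  have hg := fun c : V → Fin 3 => (goodAt_trace hreg (by omega) G.totalDegree (p ^ e) hq G (GG_dec e D f θ hθ1) B K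
    (shf d) (ZB (fun v => c v = 0))).scale ((∏ v, kap (c v) : ℤ) : R) ((∏ v, del (p ^ e) (d v) (c v) : ℕ) : R)
  refine (GoodAt.sum Finset.univ _ _ fun c _ => hg c).congr fun m hm => ?_
  have hdel : ∀ c : V → Fin 3, ((∏ v, del (p ^ e) (d v) (c v) : ℕ) : R) ^ m =
      ((∏ v, del ((p ^ e) ^ m) (d v) (c v) : ℕ) : R) := by
    intro c
    rw [← Nat.cast_pow, ← Finset.prod_pow]
    congr 1
    refine Finset.prod_congr rfl fun v _ => ?_
    unfold del
    split_ifs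
    · simp only [← pow_mul]
      congr 1
      ring
    · simp
  have hs := sum_eval (d := d) hS (e * m) G.totalDegree ((p ^ e) ^ m) (Nat.mul_pos he hm) (pow_mul p e m).symm
    (Hp (p ^ e) G m) (fun w hw x => Hp_bd _ _ hq G hBd m w hw x)
  simp only [hdel, Amat_pow _ _ hq G hBd]
  rw [← hs, expsum, ← Finset.sum_sub_distrib]
  refine Finset.dvd_sum fun x hx => ?_
  refine psi_trace hS e D m f hD hf θ hθ2 x fun v => ?_
  exact (mem_Fq (Nat.mul_pos (Nat.mul_pos he hm) (NeZero.pos (d v))) _).1 (Fintype.mem_piFinset.1 hx v)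

end expsum

end FVec


namespace FVec

section final

variable {p : ℕ} [Fact p.Prime] {R : Type} [CommRing R] {T : Om p →* R} {ζ : R}

theorem exists_trace_ne (N : ℕ) (hN : 1 ≤ N) : ∃ t ∈ Fq p N, Tr N t ≠ 0 := by
  by_contra hcon
  push Not at hcon
  have hp := (Fact.out : p.Prime)
  have h0 : (∑ j ∈ Finset.range N, Polynomial.X ^ p ^ j : Polynomial (Om p)) = 0 := by
    apply Polynomial.eq_zero_of_natDegree_lt_card_of_eval_eq_zero' _ (Fq p N)
    · intro i hi
      rw [Polynomial.eval_finset_sum]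
      simpa [Tr] using hcon i hi
    · rw [card_Fq hN]
      refine lt_of_le_of_lt (Polynomial.natDegree_sum_le_of_forall_le (n := p ^ (N - 1)) _ _ fun j hj => ?_)
        (Nat.pow_lt_pow_right hp.one_lt (by omega))
      rw [Polynomial.natDegree_X_pow]
      exact Nat.pow_le_pow_right hp.pos (by have := Finset.mem_range.1 hj; omega)
  have h1 := congrArg (fun P => Polynomial.coeff P 1) h0
  simp only [Polynomial.finsetSum_coeff, Polynomial.coeff_zero] at h1
  rw [Finset.sum_eq_single 0] at h1
  · simp at h1
  · intro j _ hj
    rw [Polynomial.coeff_X_pow, if_neg]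
    exact (Nat.one_lt_pow hj hp.one_lt).ne
  · intro h
    exact absurd (Finset.mem_range.2 hN) h

theorem Tr_add (N : ℕ) (a b : Om p) : Tr N (a + b) = Tr N a + Tr N b := by
  unfold Tr
  rw [← Finset.sum_add_distrib]
  exact Finset.sum_congr rfl fun j _ => add_pow_char_pow _ _ _ _

theorem Tr_zero (N : ℕ) : Tr N (0 : Om p) = 0 := by
  unfold Tr
  refine Finset.sum_eq_zero fun j _ => zero_pow (pow_ne_zero _ (Fact.out : p.Prime).ne_zero)

theorem psi_add (hζ : ∑ i ∈ Finset.range p, ζ ^ i = 0) (N : ℕ) (a b : Om p) (ha : a ^ p ^ N = a) (hb : b ^ p ^ N = b) :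
    psi ζ (Tr N (a + b)) = psi ζ (Tr N a) * psi ζ (Tr N b) := by
  obtain ⟨x, hx⟩ := Tr_nat N a ha
  obtain ⟨y, hy⟩ := Tr_nat N b hb
  rw [Tr_add, ← hx, ← hy, ← Nat.cast_add, psi_nat hζ, psi_nat hζ, psi_nat hζ, pow_add]

theorem psi_sum (hζ : ∑ i ∈ Finset.range p, ζ ^ i = 0) (N : ℕ) {α : Type*} (s : Finset α) (a : α → Om p)
    (ha : ∀ i, a i ^ p ^ N = a i) :
    psi ζ (Tr N (∑ i ∈ s, a i)) = ∏ i ∈ s, psi ζ (Tr N (a i)) := by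
  choose x hx using fun i => Tr_nat N (a i) (ha i)
  rw [Tr_sum]
  simp only [← hx, psi_nat hζ]
  rw [← Nat.cast_sum, psi_nat hζ, Finset.prod_pow_eq_pow_sum]

theorem orth (hS : Setup p R T ζ) (N : ℕ) (hN : 1 ≤ N) (w : Om p) (hw : w ^ p ^ N = w) [Decidable (w = 0)] :
    ∑ y ∈ Fq p N, psi ζ (Tr N (y * w)) = if w = 0 then (p : R) ^ N else 0 := by
  have hζ := hS.zeta_sum
  split_ifs with h
  · subst h
    have : psi ζ (0 : Om p) = 1 := by
      have := psi_nat hζ 0 (p := p)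
      simpa using this
    simp only [mul_zero, Tr_zero, this, Finset.sum_const, card_Fq hN]
    simp
  · obtain ⟨t, ht, htr⟩ := exists_trace_ne (p := p) N hN
    have ht' := (mem_Fq hN t).1 ht
    obtain ⟨a, ha⟩ := Tr_nat N t ht'
    set S := ∑ y ∈ Fq p N, psi ζ (Tr N (y * w)) with hSdef
    have hinv : (t / w) ^ p ^ N = t / w := by rw [div_pow, ht', hw]
    have hadd : ∀ y z : Om p, y ^ p ^ N = y → z ^ p ^ N = z → (y + z) ^ p ^ N = y + z := by
      intro y z hy hz
      rw [add_pow_char_pow, hy, hz]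
    have hneg : ∀ y : Om p, y ^ p ^ N = y → (-y) ^ p ^ N = -y := by
      intro y hy
      have h1 : (y + -y) ^ p ^ N = y ^ p ^ N + (-y) ^ p ^ N := add_pow_char_pow _ _ _ _
      rw [add_neg_cancel, zero_pow (pow_ne_zero _ (Fact.out : p.Prime).ne_zero), hy] at h1
      exact (neg_eq_of_add_eq_zero_right h1.symm).symm
    have h1 : ζ ^ a * S = S := by
      rw [hSdef, Finset.mul_sum]
      refine Finset.sum_bij' (fun y _ => y + t / w) (fun y _ => y + -(t / w)) ?_ ?_ ?_ ?_ ?_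
      · intro y hy
        rw [mem_Fq hN] at hy ⊢
        exact hadd _ _ hy hinv
      · intro y hy
        rw [mem_Fq hN] at hy ⊢
        exact hadd _ _ hy (hneg _ hinv)
      · intro y _; ring
      · intro y _; ring
      · intro y hy
        rw [mem_Fq hN] at hy
        rw [add_mul, div_mul_cancel₀ _ h, psi_add hζ N _ _ (by rw [mul_pow, hy, hw]) ht', ← ha, psi_nat hζ, mul_comm]
    have h2 : ∀ k, ζ ^ (a * k) * S = S := by
      intro k
      induction k with
      | zero => simp
      | succ k ih => rw [mul_add, mul_one, pow_add, mul_assoc, h1, ih]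
    have ha0 : (a : ZMod p) ≠ 0 := by
      intro h0
      rw [ZMod.natCast_eq_zero_iff] at h0
      exact htr (ha ▸ (CharP.cast_eq_zero_iff (Om p) p a).2 h0)
    have h3 : ((a * ((a : ZMod p)⁻¹).val : ℕ) : Om p) = ((1 : ℕ) : Om p) := by
      rw [CharP.natCast_eq_natCast (Om p) p, ← ZMod.natCast_eq_natCast_iff]
      push_cast
      rw [ZMod.natCast_val, ZMod.cast_id, mul_inv_cancel₀ ha0]
    have h4 := h2 ((a : ZMod p)⁻¹).val
    rw [zeta_congr hζ h3, pow_one] at h4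
    exact varpi_reg hζ hS.torsion S (by rw [sub_mul, h4]; ring)

open MvPolynomial

variable {n r : ℕ}

/-- the polynomial `∑ y_j f_j` -/
noncomputable def FF (f : Fin r → MvPolynomial (Fin n) (Om p)) : MvPolynomial (Fin n ⊕ Fin r) (Om p) :=
  ∑ j, X (Sum.inr j) * rename Sum.inl (f j)

theorem FF_coeff (e : ℕ) (f : Fin r → MvPolynomial (Fin n) (Om p))
    (hf : ∀ j c, ((f j).coeff c) ^ (p ^ e) = (f j).coeff c) (u) : coeff u (FF f) ^ p ^ e = coeff u (FF f) := by
  have h1 : ∀ j, map (iterateFrobenius (Om p) p e) (f j) = f j := by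
    intro j
    ext c
    rw [coeff_map, iterateFrobenius_def, hf]
  have h2 : map (iterateFrobenius (Om p) p e) (FF f) = FF f := by
    unfold FF
    rw [map_sum]
    refine Finset.sum_congr rfl fun j _ => ?_
    rw [map_mul, map_X, map_rename, h1]
  have h3 := congrArg (coeff u) h2
  rwa [coeff_map, iterateFrobenius_def] at h3

theorem eval_FF (f : Fin r → MvPolynomial (Fin n) (Om p)) (x : Fin n → Om p) (y : Fin r → Om p) :
    eval (Sum.elim x y) (FF f) = ∑ j, y j * eval x (f j) := by
  unfold FF
  rw [map_sum]
  refine Finset.sum_congr rfl fun j _ => ?_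
  rw [map_mul, eval_X, eval_rename]
  rfl

/-- the solution set -/
noncomputable def Sol (d : Fin n → ℕ) (e : ℕ) (f : Fin r → MvPolynomial (Fin n) (Om p)) (m : ℕ) :
    Finset (Fin n → Om p) := by
  classical
  exact (Fintype.piFinset (fun i => Fq p (e * m * d i))).filter fun x => ∀ j, eval x (f j) = 0

theorem Sol_card (d : Fin n → ℕ) (hd : ∀ i, 1 ≤ d i) (e : ℕ) (he : 1 ≤ e)
    (f : Fin r → MvPolynomial (Fin n) (Om p)) (m : ℕ) (hm : 1 ≤ m) :
    Nat.card {x : Fin n → Om p // (∀ j, eval x (f j) = 0) ∧ ∀ i, (x i) ^ ((p ^ e) ^ (m * d i)) = x i}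
      = (Sol d e f m).card := by
  apply Nat.subtype_card
  classical
  intro x
  rw [Sol, Finset.mem_filter, and_comm, Fintype.mem_piFinset]
  refine and_congr Iff.rfl (forall_congr' fun i => ?_)
  rw [mem_Fq (Nat.mul_pos (Nat.mul_pos he hm) (hd i)), mul_assoc, pow_mul]

theorem Sol_le (d : Fin n → ℕ) (hd : ∀ i, 1 ≤ d i) (e : ℕ) (he : 1 ≤ e)
    (f : Fin r → MvPolynomial (Fin n) (Om p)) (m : ℕ) (hm : 1 ≤ m) :
    (Sol d e f m).card ≤ (p ^ (e * ∑ i, d i)) ^ m := by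
  classical
  unfold Sol
  refine (Finset.card_filter_le _ _).trans ?_
  rw [Fintype.card_piFinset]
  have : ∀ i, (Fq p (e * m * d i)).card = p ^ (e * m * d i) := fun i =>
    card_Fq (Nat.mul_pos (Nat.mul_pos he hm) (hd i))
  simp only [this]
  rw [Finset.prod_pow_eq_pow_sum, ← Finset.mul_sum, ← pow_mul]
  apply le_of_eq
  congr 1
  ring

theorem expsum_eq (hS : Setup p R T ζ) (d : Fin n → ℕ) (hd : ∀ i, 1 ≤ d i) (e : ℕ) (he : 1 ≤ e)
    (f : Fin r → MvPolynomial (Fin n) (Om p)) (hf : ∀ j c, ((f j).coeff c) ^ (p ^ e) = (f j).coeff c)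
    (D : ℕ) (hD1 : 1 ≤ D) (hD : ∀ i, d i ∣ D) (m : ℕ) (hm : 1 ≤ m) :
    expsum (Sum.elim d (fun _ : Fin r => D)) ζ e D (FF f) m = ((p : R) ^ (e * m * D)) ^ r * ((Sol d e f m).card : R) := by
  classical
  have hN : 1 ≤ e * m * D := Nat.mul_pos (Nat.mul_pos he hm) hD1
  unfold expsum
  have h1 : ∑ x ∈ Fintype.piFinset (fun v => Fq p (e * m * Sum.elim d (fun _ : Fin r => D) v)),
      psi ζ (Tr (e * m * D) (eval x (FF f))) =
      ∑ z ∈ (Fintype.piFinset (fun i => Fq p (e * m * d i))) ×ˢ (Fintype.piFinset (fun _ : Fin r => Fq p (e * m * D))),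
      psi ζ (Tr (e * m * D) (∑ j, z.2 j * eval z.1 (f j))) := by
    refine Finset.sum_bij' (fun x _ => (x ∘ Sum.inl, x ∘ Sum.inr)) (fun z _ => Sum.elim z.1 z.2) ?_ ?_ ?_ ?_ ?_
    · intro x hx
      rw [Fintype.mem_piFinset] at hx
      rw [Finset.mem_product, Fintype.mem_piFinset, Fintype.mem_piFinset]
      exact ⟨fun i => hx (Sum.inl i), fun j => hx (Sum.inr j)⟩
    · intro z hz
      rw [Finset.mem_product, Fintype.mem_piFinset, Fintype.mem_piFinset] at hz
      rw [Fintype.mem_piFinset]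
      rintro (i | j)
      · exact hz.1 i
      · exact hz.2 j
    · intro x _
      exact Sum.elim_comp_inl_inr x
    · intro z _
      rfl
    · intro x _
      dsimp only
      rw [← eval_FF, Sum.elim_comp_inl_inr]
  rw [h1, Finset.sum_product]
  have h2 : ∀ x ∈ Fintype.piFinset (fun i => Fq p (e * m * d i)),
      ∑ y ∈ Fintype.piFinset (fun _ : Fin r => Fq p (e * m * D)), psi ζ (Tr (e * m * D) (∑ j, y j * eval x (f j))) =
      if ∀ j, eval x (f j) = 0 then ((p : R) ^ (e * m * D)) ^ r else 0 := by
    intro x hx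
    rw [Fintype.mem_piFinset] at hx
    have hx' : ∀ i, x i ^ p ^ (e * m * D) = x i := by
      intro i
      have h0 := (mem_Fq (Nat.mul_pos (Nat.mul_pos he hm) (hd i)) _).1 (hx i)
      obtain ⟨k, hk⟩ := hD i
      rw [hk, ← mul_assoc, pow_mul]
      exact pow_iter _ _ _ h0
    have hw : ∀ j, eval x (f j) ^ p ^ (e * m * D) = eval x (f j) := by
      intro j
      rw [eval_eq', sum_pow_char_pow]
      refine Finset.sum_congr rfl fun u _ => ?_
      rw [mul_pow, ← Finset.prod_pow]
      have h0 : coeff u (f j) ^ p ^ (e * m * D) = coeff u (f j) := by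
        rw [mul_assoc, pow_mul]
        exact pow_iter _ _ _ (hf j u)
      rw [h0]
      congr 1
      refine Finset.prod_congr rfl fun v _ => ?_
      rw [← pow_mul, mul_comm, pow_mul, hx']
    have h3 : ∀ y ∈ Fintype.piFinset (fun _ : Fin r => Fq p (e * m * D)),
        psi ζ (Tr (e * m * D) (∑ j, y j * eval x (f j))) =
        ∏ j, psi ζ (Tr (e * m * D) (y j * eval x (f j))) := by
      intro y hy
      rw [Fintype.mem_piFinset] at hy
      apply psi_sum hS.zeta_sum
      intro j
      rw [mul_pow, hw, (mem_Fq hN _).1 (hy j)]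
    rw [Finset.sum_congr rfl h3]
    rw [← Finset.prod_univ_sum (fun _ : Fin r => Fq p (e * m * D))
      (fun j y => psi ζ (Tr (e * m * D) (y * eval x (f j))))]
    simp only [orth hS _ hN _ (hw _)]
    split_ifs with h
    · rw [Finset.prod_congr rfl fun j _ => if_pos (h j)]
      simp
    · push Not at h
      obtain ⟨j, hj⟩ := h
      exact Finset.prod_eq_zero (Finset.mem_univ j) (if_neg hj)
  rw [Finset.sum_congr rfl h2, ← Finset.sum_filter, Finset.sum_const, nsmul_eq_mul, mul_comm, Sol]

theorem descale (N : ℕ → ℚ) (s : ℚ) (hs : s ≠ 0) (b : ℕ → ℚ) (hb : ∀ m, b (m + 1) = s ^ (m + 1) * N (m + 1))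
    (h : ∃ A B : Polynomial ℚ, B ≠ 0 ∧ (B : PowerSeries ℚ) * PowerSeries.mk (fun m => b (m + 1)) = (A : PowerSeries ℚ)) :
    ∃ A B : Polynomial ℚ, B ≠ 0 ∧
      (B : PowerSeries ℚ) * PowerSeries.mk (fun m => if m = 0 then 0 else N m) = (A : PowerSeries ℚ) := by
  obtain ⟨A, B, hB, hAB⟩ := h
  have hres : ∀ P : Polynomial ℚ, PowerSeries.rescale s⁻¹ (P : PowerSeries ℚ) =
      ((P.comp (Polynomial.C s⁻¹ * Polynomial.X) : Polynomial ℚ) : PowerSeries ℚ) := by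
    intro P
    ext i
    rw [PowerSeries.coeff_rescale, Polynomial.coeff_coe, Polynomial.coeff_coe, Polynomial.comp_C_mul_X_coeff, mul_comm]
  have hN : PowerSeries.mk (fun m => if m = 0 then 0 else N m) = ((Polynomial.C s⁻¹ * Polynomial.X : Polynomial ℚ) : PowerSeries ℚ) *
      PowerSeries.rescale s⁻¹ (PowerSeries.mk (fun m => b (m + 1))) := by
    rw [Polynomial.coe_mul, Polynomial.coe_C, Polynomial.coe_X, mul_assoc]
    ext i
    rw [PowerSeries.coeff_C_mul]
    cases i with
    | zero => simp
    | succ i =>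
      rw [PowerSeries.coeff_succ_X_mul, PowerSeries.coeff_rescale, PowerSeries.coeff_mk, PowerSeries.coeff_mk, hb,
        if_neg (by omega), inv_pow]
      field_simp
      ring
  refine ⟨(Polynomial.C s⁻¹ * Polynomial.X) * A.comp (Polynomial.C s⁻¹ * Polynomial.X),
    B.comp (Polynomial.C s⁻¹ * Polynomial.X), ?_, ?_⟩
  · intro h0
    apply hB
    ext i
    have := congrArg (fun P => Polynomial.coeff P i) h0
    simp only [Polynomial.comp_C_mul_X_coeff, Polynomial.coeff_zero] at this
    rw [Polynomial.coeff_zero]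
    exact (mul_eq_zero.1 this).resolve_right (pow_ne_zero _ (inv_ne_zero hs))
  · rw [hN, mul_left_comm, ← hres, ← map_mul, hAB, hres, ← Polynomial.coe_mul]

theorem main (p : ℕ) [Fact p.Prime] (e : ℕ)
    (he : 1 ≤ e) (n r : ℕ) (d : Fin n → ℕ) (hd : ∀ i, 1 ≤ d i)
    (f : Fin r → MvPolynomial (Fin n) (Om p))
    (hf : ∀ j c, ((f j).coeff c) ^ (p ^ e) = (f j).coeff c) :
    ∃ a b : Polynomial ℚ, b ≠ 0 ∧
      (b : PowerSeries ℚ) *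
        PowerSeries.mk (fun m => if m = 0 then 0 else
          (Nat.card {x : Fin n → Om p //
            (∀ j, MvPolynomial.eval x (f j) = 0) ∧
            ∀ i, (x i) ^ ((p ^ e) ^ (m * d i)) = x i} : ℚ)) = (a : PowerSeries ℚ) := by
  have hp := (Fact.out : p.Prime)
  obtain ⟨R, _, T, ζ, hS⟩ := exists_setup p
  obtain ⟨D, hD1, hD⟩ : ∃ D, 1 ≤ D ∧ ∀ i, d i ∣ D :=
    ⟨∏ i, d i, Nat.succ_le_of_lt (Finset.prod_pos fun i _ => hd i), fun i => Finset.dvd_prod_of_mem _ (Finset.mem_univ i)⟩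
  have hN : ∀ m, (if m = 0 then 0 else
          (Nat.card {x : Fin n → Om p //
            (∀ j, MvPolynomial.eval x (f j) = 0) ∧
            ∀ i, (x i) ^ ((p ^ e) ^ (m * d i)) = x i} : ℚ)) = if m = 0 then 0 else ((Sol d e f m).card : ℚ) := by
    intro m
    split_ifs with h
    · rfl
    · rw [Sol_card d hd e he f m (by omega)]
  simp only [hN]
  have hs0 : ((p : ℚ) ^ (e * D * r)) ≠ 0 := pow_ne_zero _ (Nat.cast_ne_zero.2 hp.ne_zero)
  set b : ℕ → ℤ := fun m => if m = 0 then 0 else ((p : ℤ) ^ (e * D * r)) ^ m * ((Sol d e f m).card : ℤ) with hb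
  refine descale (fun m => ((Sol d e f m).card : ℚ)) _ hs0 (fun m => (b m : ℚ)) (fun m => ?_) ?_
  · simp [hb]
  haveI : ∀ v, NeZero (Sum.elim d (fun _ : Fin r => D) v) := by
    rintro (i | j)
    · exact ⟨(Nat.pos_iff_ne_zero.1 (hd i))⟩
    · exact ⟨(Nat.pos_iff_ne_zero.1 hD1)⟩
  refine good_rational p hp (dvd_varpi_pow hS.zeta_sum) hS.desc b (p ^ (e * D * r) * p ^ (e * ∑ i, d i))
    (Nat.mul_pos (pow_pos hp.pos _) (pow_pos hp.pos _)) (fun m => ?_) ?_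
  · by_cases h : m = 0
    · simp [hb, h]
    · simp only [hb, if_neg h]
      rw [abs_of_nonneg (by positivity)]
      push_cast
      rw [mul_pow]
      apply mul_le_mul_of_nonneg_left _ (by positivity)
      exact_mod_cast Sol_le d hd e he f m (by omega)
  · refine (expsum_good (d := Sum.elim d (fun _ : Fin r => D)) hS e D he (FF f) ?_ (FF_coeff e f hf)).congr fun m hm => ?_
    · rintro (i | j)
      · exact hD i
      · exact dvd_rfl
    · rw [expsum_eq hS d hd e he f hf D hD1 hD m hm]
      simp only [hb, if_neg (by omega : m ≠ 0)]
      push_cast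
      congr 1
      rw [← pow_mul, ← pow_mul]
      congr 1
      ring

end final

end FVec

open PowerSeries

/-- Wan's rationality theorem for zeta functions attached to Frobenius vectors, in
Poincaré-series form: for positive integers `d₁, …, dₙ` and polynomials `f j` over
`Ω = AlgebraicClosure (ZMod p)` with all coefficients fixed by `c ↦ c^q` (`q = p^e`), the
series whose `m`-th coefficient counts common zeros whose `i`-th coordinate lies in the
subfield with `q^{m·dᵢ}` elements is rational. -/
theorem frobenius_vector_poincare_series_rational (p : ℕ) [Fact p.Prime] (e : ℕ)
    (he : 1 ≤ e) (n r : ℕ) (d : Fin n → ℕ) (hd : ∀ i, 1 ≤ d i)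
    (f : Fin r → MvPolynomial (Fin n) (AlgebraicClosure (ZMod p)))
    (hf : ∀ j c, ((f j).coeff c) ^ (p ^ e) = (f j).coeff c) :
    ∃ a b : Polynomial ℚ, b ≠ 0 ∧
      (b : PowerSeries ℚ) *
        PowerSeries.mk (fun m => if m = 0 then 0 else
          (Nat.card {x : Fin n → AlgebraicClosure (ZMod p) //
            (∀ j, MvPolynomial.eval x (f j) = 0) ∧
            ∀ i, (x i) ^ ((p ^ e) ^ (m * d i)) = x i} : ℚ)) = (a : PowerSeries ℚ) := by
  exact FVec.main p e he n r d hd f hf
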